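/- arXiv:2507.01529 — 4 statements merged into one kernel-verified Lean document; each statement's English description precedes it below -/
import Mathlib

section
/- Let k be a positive integer and let p be a prime with p ≡ 5 (mod 6). Let r be a nonnegative integer such that p divides 6r+5. Then for all integers n ≥ 0, B̄_{2,9}( 18p^{k+1} n + 18pr + 15p ) ≡ (−p) · B̄_{2,9}( 18p^{k−1} n + (18r+15)/p ) (mod 3). -/
/-- `biregOverpartitions l1 l2 n` is the number of `(l1, l2)`-biregular overpartitions of `n`:
overpartitions of `n` (partitions in which the first occurrence of each part size may be
overlined) none of whose parts is divisible by `l1` or by `l2`.  Each partition of `n` with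
admissible parts contributes `2 ^ (number of distinct part sizes)` overpartitions,
corresponding to the choice of which part sizes have their first occurrence overlined. -/
def biregOverpartitions (l1 l2 n : ℕ) : ℕ :=
  ∑ p : Nat.Partition n,
    if ∀ x ∈ p.parts, ¬ l1 ∣ x ∧ ¬ l2 ∣ x then 2 ^ p.parts.toFinset.card else 0

/-!
Write `φ(q) = ∑ q ^ x ^ 2` over all integers `x`. Gauss's identity says that `φ(-q)` is the product
of the factors `(1 - q ^ n) / (1 + q ^ n)`, the reciprocal of the generating function of
overpartitions, so inclusion-exclusion gives the generating function of `B = B̄_{2,9}` as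
`φ(-q²) φ(-q⁹) / (φ(-q) φ(-q¹⁸))`. Modulo 3, where `f(q³) = f(q) ^ 3`, the identity
`φ(q) φ(-q) = φ(-q²) ^ 2` turns this into `φ(-q) ^ 4 / φ(q) ^ 4`.

Modulo 3, `φ ^ 4 = φ(q) φ(q³)` counts the representations by `x ^ 2 + 3 * y ^ 2`. A positive even
number has a multiple of three of them, because the order-three rotation of the hexagonal lattice
permutes them without fixed points. Hence `φ(q) ^ 4 + φ(-q) ^ 4 = -1`, and comparing coefficients at
multiples of 3 yields `B(3n) ≡ -#{(x, y) | x ^ 2 + 3 * y ^ 2 = n}` for `n > 0`. As `-3` is not a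
square modulo `p`, the number of representations does not change when `n` is multiplied by `p ^ 2`.
-/

open Finset PowerSeries

section FiniteGaussIdentity
variable {R : Type*} [CommRing R]

/-- The shape of the error terms in the finite form of Gauss's theta identity. The lower end `m` of
the last product is free so that the terms at `m = s` and at `m = s + 1` telescope against each
other when `n` grows. -/
def gaussTerm (q : R) (n s m : ℕ) : R :=
  q ^ ((s + 1) * (n + 1)) * (∏ i ∈ range s, (1 + q ^ (i + 1))) * ∏ i ∈ Ico m n, (1 - q ^ (i + 1))

theorem gaussTerm_succ (q : R) {n s : ℕ} (hs : s < n) :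
    gaussTerm q (n + 1) s (s + 1) = (1 + q ^ (n + 1)) * gaussTerm q n s (s + 1)
      - (gaussTerm q n s s + gaussTerm q n (s + 1) (s + 1)) := by
  rw [gaussTerm, gaussTerm, gaussTerm, gaussTerm, prod_Ico_succ_top hs,
    prod_eq_prod_Ico_succ_bot hs, prod_range_succ]
  ring

theorem sum_alternating_gaussTerm_succ (q : R) (n : ℕ) :
    ∑ s ∈ range n, (-1) ^ (s + 1) * gaussTerm q (n + 1) s (s + 1)
      = (1 + q ^ (n + 1)) * ∑ s ∈ range n, (-1) ^ (s + 1) * gaussTerm q n s (s + 1)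
        + gaussTerm q n 0 0 - (-1) ^ n * gaussTerm q n n n := by
  have htelescope := sum_range_sub (fun s ↦ (-1) ^ s * gaussTerm q n s s) n
  have hterm : ∀ s ∈ range n, (-1) ^ (s + 1) * gaussTerm q (n + 1) s (s + 1)
      = (1 + q ^ (n + 1)) * ((-1) ^ (s + 1) * gaussTerm q n s (s + 1))
        - ((-1) ^ (s + 1) * gaussTerm q n (s + 1) (s + 1) - (-1) ^ s * gaussTerm q n s s) := by
    intro s hs
    rw [gaussTerm_succ q (mem_range.1 hs)]
    ring
  rw [sum_congr rfl hterm, sum_sub_distrib, ← mul_sum, htelescope]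
  ring

theorem alternating_sum_pow_sq_mul_prod_one_add_pow (q : R) (n : ℕ) :
    (1 + 2 * ∑ s ∈ range n, (-1) ^ (s + 1) * q ^ ((s + 1) ^ 2)) * ∏ i ∈ range n, (1 + q ^ (i + 1))
      = ∏ i ∈ range n, (1 - q ^ (i + 1))
        + 2 * ∑ s ∈ range n, (-1) ^ (s + 1) * gaussTerm q n s (s + 1) := by
  induction n with
  | zero => simp
  | succ n ih =>
    have hlast : gaussTerm q (n + 1) n (n + 1)
        = q ^ (n + 1) * (q ^ ((n + 1) ^ 2) * ∏ i ∈ range n, (1 + q ^ (i + 1))) := by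
      rw [gaussTerm, Ico_self, prod_empty]
      ring
    have htop : gaussTerm q n n n = q ^ ((n + 1) ^ 2) * ∏ i ∈ range n, (1 + q ^ (i + 1)) := by
      rw [gaussTerm, Ico_self, prod_empty]
      ring
    have hbot : gaussTerm q n 0 0 = q ^ (n + 1) * ∏ i ∈ range n, (1 - q ^ (i + 1)) := by
      rw [gaussTerm, ← range_eq_Ico, prod_range_zero]
      ring
    rw [sum_range_succ, sum_range_succ, prod_range_succ, prod_range_succ,
      sum_alternating_gaussTerm_succ, hlast, htop, hbot]
    linear_combination (1 + q ^ (n + 1)) * ih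

theorem pow_succ_dvd_alternating_sum_pow_sq_mul_prod_sub_prod (q : R) (n : ℕ) :
    q ^ (n + 1) ∣
      (1 + 2 * ∑ s ∈ range n, (-1) ^ (s + 1) * q ^ ((s + 1) ^ 2)) * ∏ i ∈ range n, (1 + q ^ (i + 1))
        - ∏ i ∈ range n, (1 - q ^ (i + 1)) := by
  rw [alternating_sum_pow_sq_mul_prod_one_add_pow, add_sub_cancel_left]
  refine dvd_mul_of_dvd_right (dvd_sum fun s _ ↦ dvd_mul_of_dvd_right ?_ _) _
  rw [gaussTerm, mul_assoc]
  exact (pow_dvd_pow q (Nat.le_mul_of_pos_left _ s.succ_pos)).mul_right _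

end FiniteGaussIdentity

theorem coeff_mul_expand {R : Type*} [CommRing R] {d : ℕ} (hd : d ≠ 0) (f g : R⟦X⟧) (n : ℕ) :
    coeff (d * n) (f * expand d hd g) = coeff n ((mk fun m ↦ coeff (d * m) f) * g) := by
  rw [coeff_mul, coeff_mul]
  refine (sum_of_injOn (fun ij ↦ (d * ij.1, d * ij.2)) ?_ ?_ ?_ ?_).symm
  · rintro ⟨i, j⟩ - ⟨i', j'⟩ - h
    simpa only [Prod.mk.injEq, mul_right_inj' hd] using h
  · rintro ⟨i, j⟩ hij
    rw [mem_coe, HasAntidiagonal.mem_antidiagonal] at hij ⊢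
    rw [← hij, mul_add]
  · rintro ⟨i, j⟩ hij hmultiple
    rw [HasAntidiagonal.mem_antidiagonal] at hij
    rw [coeff_expand_of_not_dvd, mul_zero]
    rintro ⟨j, rfl⟩
    obtain ⟨i, rfl⟩ := (Nat.dvd_add_left (dvd_mul_right d j)).1 (hij ▸ dvd_mul_right d n)
    rw [← mul_add] at hij
    exact hmultiple ⟨(i, j), HasAntidiagonal.mem_antidiagonal.2 (mul_left_cancel₀ hd hij), rfl⟩
  · rintro ⟨i, j⟩ -
    rw [coeff_mk, coeff_expand_mul]

section FiberCountSeries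
variable (R : Type*) [CommRing R] {ι κ : Type*}

/-- The generating function `∑ i, X ^ f i` of a weight `f`, defined by its coefficients: a weight
attained infinitely often has coefficient `0`. -/
noncomputable def fiberCountSeries (f : ι → ℕ) : R⟦X⟧ := mk fun n ↦ (Nat.card {i // f i = n} : R)

variable {R}

theorem coeff_fiberCountSeries (f : ι → ℕ) (n : ℕ) :
    coeff n (fiberCountSeries R f) = Nat.card {i // f i = n} :=
  coeff_mk _ _

theorem expand_fiberCountSeries {d : ℕ} (hd : d ≠ 0) (f : ι → ℕ) :
    expand d hd (fiberCountSeries R f) = fiberCountSeries R fun i ↦ d * f i := by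
  ext n
  rw [coeff_expand, coeff_fiberCountSeries, coeff_fiberCountSeries]
  split_ifs with hdn
  · obtain ⟨m, rfl⟩ := hdn
    simp only [Nat.mul_div_cancel_left m (Nat.pos_of_ne_zero hd), mul_right_inj' hd]
  · have : IsEmpty {i // d * f i = n} := ⟨fun i ↦ hdn ⟨f i, i.2.symm⟩⟩
    rw [Nat.card_of_isEmpty, Nat.cast_zero]

theorem fiberCountSeries_mul {f : ι → ℕ} {g : κ → ℕ} (hf : ∀ n, Finite {i // f i = n})
    (hg : ∀ n, Finite {k // g k = n}) :
    fiberCountSeries R f * fiberCountSeries R g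
      = fiberCountSeries R fun z : ι × κ ↦ f z.1 + g z.2 := by
  ext n
  let e : {z : ι × κ // f z.1 + g z.2 = n} ≃
      Σ ij : antidiagonal n, {i // f i = ij.1.1} × {k // g k = ij.1.2} :=
    { toFun z := ⟨⟨(f z.1.1, g z.1.2), mem_antidiagonal.2 z.2⟩, ⟨z.1.1, rfl⟩, ⟨z.1.2, rfl⟩⟩
      invFun w := ⟨(w.2.1, w.2.2), by rw [w.2.1.2, w.2.2.2, mem_antidiagonal.1 w.1.2]⟩
      left_inv _ := rfl
      right_inv := by
        rintro ⟨⟨⟨i, j⟩, _⟩, ⟨x, rfl : f x = i⟩, ⟨y, rfl : g y = j⟩⟩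
        rfl }
  rw [coeff_mul, coeff_fiberCountSeries, Nat.card_congr e, Nat.card_sigma, Nat.cast_sum,
    ← sum_coe_sort]
  simp only [coeff_fiberCountSeries, Nat.card_prod, Nat.cast_mul]

theorem X_pow_dvd_fiberCountSeries_sub_sum {f : ι → ℕ} {N : ℕ} {s : Finset ι}
    (hs : ∀ i, f i < N → i ∈ s) : X ^ N ∣ fiberCountSeries R f - ∑ i ∈ s, X ^ f i := by
  classical
  rw [X_pow_dvd_iff]
  intro n hn
  have hfiber : Nat.card {i // f i = n} = #{i ∈ s | n = f i} :=
    Nat.subtype_card _ fun i ↦ by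
      rw [mem_filter, eq_comm (a := n)]
      exact ⟨And.right, fun hi ↦ ⟨hs i (hi ▸ hn), hi⟩⟩
  rw [map_sub, map_sum, coeff_fiberCountSeries, hfiber]
  simp only [coeff_X_pow, sum_boole, sub_self]

end FiberCountSeries

section Theta
variable (R : Type*) [CommRing R]

/-- Jacobi's theta series `φ = ∑ X ^ x ^ 2` over all integers `x`. -/
noncomputable def theta : R⟦X⟧ := fiberCountSeries R fun x : ℤ ↦ x.natAbs ^ 2

/-- The number of representations of `n` by the binary quadratic form `x ^ 2 + d * y ^ 2`; for
`d = 0` there may be infinitely many, and then the value is `0`. -/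
noncomputable def sqAddMulSqCount (d n : ℕ) : ℕ :=
  Nat.card {z : ℤ × ℤ // z.1 ^ 2 + d * z.2 ^ 2 = n}

variable {R}

theorem finite_mul_natAbs_sq_eq {d : ℕ} (hd : d ≠ 0) (n : ℕ) :
    Finite {x : ℤ // d * x.natAbs ^ 2 = n} := by
  refine ((Set.finite_Icc (-n : ℤ) n).subset fun x (hx : d * x.natAbs ^ 2 = n) ↦ ?_).to_subtype
  have : x.natAbs ≤ n := hx ▸ (Nat.le_self_pow two_ne_zero _).trans
    (Nat.le_mul_of_pos_left _ (Nat.pos_of_ne_zero hd))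
  exact Set.mem_Icc.2 (by omega)

theorem coeff_theta_mul_expand_theta {d : ℕ} (hd : d ≠ 0) (n : ℕ) :
    coeff n (theta R * expand d hd (theta R)) = sqAddMulSqCount d n := by
  rw [theta, expand_fiberCountSeries, fiberCountSeries_mul
    (fun m ↦ by simpa only [one_mul] using finite_mul_natAbs_sq_eq one_ne_zero m)
    (finite_mul_natAbs_sq_eq hd), coeff_fiberCountSeries, sqAddMulSqCount]
  congr 1
  refine Nat.card_congr (Equiv.subtypeEquivRight fun z ↦ ?_)
  zify
  rw [sq_abs, sq_abs]

theorem X_pow_succ_dvd_theta_sub (n : ℕ) :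
    X ^ (n + 1) ∣ theta R - (1 + 2 * ∑ s ∈ range n, X ^ ((s + 1) ^ 2)) := by
  have hmem (x : ℤ) (hx : x.natAbs ^ 2 < n + 1) : x ∈ Icc (-n : ℤ) n := by
    have := Nat.le_self_pow two_ne_zero x.natAbs
    exact mem_Icc.2 (by omega)
  have hsum : ∑ x ∈ Icc (-n : ℤ) n, (X : R⟦X⟧) ^ x.natAbs ^ 2
      = 1 + 2 * ∑ s ∈ range n, X ^ ((s + 1) ^ 2) := by
    have hnat (s : ℕ) : ((s + 1 : ℕ) : ℤ).natAbs = s + 1 := Int.natAbs_natCast _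
    rw [sum_Icc_of_even_eq_range fun x ↦ by rw [Int.natAbs_neg], sum_range_succ']
    simp only [hnat, Nat.cast_zero, Int.natAbs_zero]
    rw [nsmul_eq_mul]
    push_cast
    ring
  exact hsum ▸ X_pow_dvd_fiberCountSeries_sub_sum hmem

theorem constantCoeff_theta : constantCoeff (theta R) = 1 := by
  have h := X_pow_succ_dvd_theta_sub (R := R) 0
  rwa [zero_add, pow_one, sum_range_zero, mul_zero, add_zero, X_dvd_iff, map_sub, map_one,
    sub_eq_zero] at h

theorem rescale_neg_one_X_pow (n : ℕ) : rescale (-1) (X ^ n : R⟦X⟧) = (-1) ^ n * X ^ n := by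
  rw [map_pow, rescale_X, mul_pow, map_neg, map_one]

theorem X_pow_succ_dvd_rescale_neg_one_theta_sub (n : ℕ) :
    X ^ (n + 1) ∣
      rescale (-1) (theta R) - (1 + 2 * ∑ s ∈ range n, (-1) ^ (s + 1) * X ^ ((s + 1) ^ 2)) := by
  have hsign (s : ℕ) : (-1 : R⟦X⟧) ^ (s + 1) ^ 2 = (-1) ^ (s + 1) :=
    neg_one_pow_congr (Nat.even_pow' two_ne_zero)
  obtain ⟨g, hg⟩ := X_pow_succ_dvd_theta_sub (R := R) n
  have h := congrArg (rescale (-1)) hg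
  simp only [map_sub, map_add, map_mul, map_sum, map_one, map_ofNat, rescale_neg_one_X_pow,
    hsign] at h
  rw [h]
  exact (dvd_mul_left _ _).mul_right _

end Theta

section OverpartitionFactor
variable {R : Type*} [CommRing R]

variable (R) in
/-- The Euler factor `(1 + X ^ n) / (1 - X ^ n)` that the part size `n` contributes to generating
functions of overpartitions. The `1` in `invOfUnit` is the constant coefficient of `1 - X ^ n`, so
only `n ≠ 0` is meaningful. -/
noncomputable def overpartitionFactor (n : ℕ) : R⟦X⟧ := (1 + X ^ n) * invOfUnit (1 - X ^ n) 1

theorem constantCoeff_one_sub_X_pow {n : ℕ} (hn : n ≠ 0) :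
    constantCoeff (1 - X ^ n : R⟦X⟧) = 1 := by
  rw [map_sub, map_pow, map_one, constantCoeff_X, zero_pow hn, sub_zero]

theorem isUnit_one_sub_X_pow {n : ℕ} (hn : n ≠ 0) : IsUnit (1 - X ^ n : R⟦X⟧) :=
  isUnit_iff_constantCoeff.2 (constantCoeff_one_sub_X_pow (R := R) hn ▸ isUnit_one)

theorem overpartitionFactor_mul_one_sub {n : ℕ} (hn : n ≠ 0) :
    overpartitionFactor R n * (1 - X ^ n) = 1 + X ^ n := by
  rw [overpartitionFactor, mul_assoc, invOfUnit_mul _ _ (constantCoeff_one_sub_X_pow hn), mul_one]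

theorem eq_overpartitionFactor {n : ℕ} (hn : n ≠ 0) {f : R⟦X⟧} (hf : f * (1 - X ^ n) = 1 + X ^ n) :
    f = overpartitionFactor R n :=
  (isUnit_one_sub_X_pow hn).mul_right_cancel (hf.trans (overpartitionFactor_mul_one_sub hn).symm)

theorem expand_overpartitionFactor {d n : ℕ} (hd : d ≠ 0) (hn : n ≠ 0) :
    expand d hd (overpartitionFactor R n) = overpartitionFactor R (d * n) := by
  refine eq_overpartitionFactor (mul_ne_zero hd hn) ?_
  have h := congrArg (expand d hd) (overpartitionFactor_mul_one_sub (R := R) hn)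
  simpa only [map_mul, map_sub, map_add, map_one, map_pow, expand_X, ← pow_mul] using h

theorem rescale_neg_one_overpartitionFactor_of_even {n : ℕ} (hn : n ≠ 0) (he : Even n) :
    rescale (-1) (overpartitionFactor R n) = overpartitionFactor R n := by
  refine eq_overpartitionFactor hn ?_
  have h := congrArg (rescale (-1)) (overpartitionFactor_mul_one_sub (R := R) hn)
  simpa only [map_mul, map_sub, map_add, map_one, rescale_neg_one_X_pow, he.neg_one_pow,
    one_mul] using h

theorem rescale_neg_one_overpartitionFactor_mul_of_odd {n : ℕ} (ho : Odd n) :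
    rescale (-1) (overpartitionFactor R n) * overpartitionFactor R n = 1 := by
  have hn : n ≠ 0 := ho.pos.ne'
  have h := congrArg (rescale (-1)) (overpartitionFactor_mul_one_sub (R := R) hn)
  simp only [map_mul, map_sub, map_add, map_one, rescale_neg_one_X_pow, ho.neg_one_pow,
    neg_one_mul, sub_neg_eq_add, ← sub_eq_add_neg] at h
  apply (isUnit_one_sub_X_pow hn).mul_right_cancel
  rw [mul_assoc, overpartitionFactor_mul_one_sub hn, h, one_mul]

end OverpartitionFactor

section Topology
open PowerSeries.WithPiTopology
variable {R : Type*} [CommRing R] [TopologicalSpace R]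

theorem continuous_of_continuous_coeff {F : R⟦X⟧ → R⟦X⟧}
    (hF : ∀ n, Continuous fun f ↦ coeff n (F f)) : Continuous F :=
  continuous_iff_continuousAt.2 fun f ↦
    (tendsto_iff_coeff_tendsto _ _ _ _).2 fun n ↦ (hF n).tendsto f

theorem continuous_expand {d : ℕ} (hd : d ≠ 0) : Continuous (expand d hd : R⟦X⟧ → R⟦X⟧) := by
  refine continuous_of_continuous_coeff fun n ↦ ?_
  simp only [coeff_expand]
  split_ifs
  · exact continuous_coeff R _
  · exact continuous_const

theorem tendsto_of_X_pow_succ_dvd_sub {F : ℕ → R⟦X⟧} {f : R⟦X⟧}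
    (h : ∀ n, X ^ (n + 1) ∣ F n - f) : Filter.Tendsto F .atTop (nhds f) := by
  refine (tendsto_iff_coeff_tendsto _ _ _ _).2 fun m ↦ tendsto_const_nhds.congr' ?_
  filter_upwards [Filter.eventually_ge_atTop m] with n hn
  have := X_pow_dvd_iff.1 (h n) m (Nat.lt_succ_of_le hn)
  rw [map_sub, sub_eq_zero] at this
  exact this.symm

variable [IsTopologicalRing R]

theorem continuous_rescale (a : R) : Continuous (rescale a : R⟦X⟧ → R⟦X⟧) := by
  refine continuous_of_continuous_coeff fun n ↦ ?_
  simp only [coeff_rescale]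
  exact continuous_const.mul (continuous_coeff R n)

variable [T2Space R]

theorem one_add_tsum_two_smul_X_pow {n : ℕ} (hn : n ≠ 0) :
    1 + ∑' j : ℕ, (2 : R) • (X : R⟦X⟧) ^ (n * (j + 1)) = overpartitionFactor R n := by
  have hconst : constantCoeff (X ^ n : R⟦X⟧) = 0 := by
    rw [map_pow, constantCoeff_X, zero_pow hn]
  have hgeom := tsum_pow_mul_one_sub_of_constantCoeff_eq_zero hconst
  have hterm (j : ℕ) : (2 : R) • (X : R⟦X⟧) ^ (n * (j + 1)) = 2 * X ^ n * (X ^ n) ^ j := by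
    rw [smul_eq_C_mul, map_ofNat]
    ring
  refine eq_overpartitionFactor hn ?_
  rw [tsum_congr hterm, (summable_pow_of_constantCoeff_eq_zero hconst).tsum_mul_left]
  linear_combination 2 * X ^ n * hgeom

end Topology

section OverpartitionSeries
open PowerSeries.WithPiTopology Set
variable (R : Type*) [CommRing R]

/-- The generating function of the overpartitions all of whose part sizes lie in `S`: each part size
that occurs counts twice, once for either choice of overlining its first occurrence. -/
noncomputable def overpartitionSeries (S : Set ℕ) : R⟦X⟧ :=
  Nat.Partition.genFun fun i _ ↦ S.indicator (fun _ ↦ 2) i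

variable {R}

theorem mk_biregOverpartitions (a b : ℕ) :
    (mk fun n ↦ (biregOverpartitions a b n : R))
      = overpartitionSeries R ({i | a ∣ i} ∪ {i | b ∣ i})ᶜ := by
  ext n
  rw [coeff_mk, overpartitionSeries, Nat.Partition.coeff_genFun, biregOverpartitions, Nat.cast_sum]
  refine sum_congr rfl fun P _ ↦ ?_
  simp only [← not_or]
  rw [Finsupp.prod, Multiset.toFinsupp_support]
  split_ifs with h
  · rw [prod_congr rfl fun i hi ↦ indicator_of_mem (h i (Multiset.mem_toFinset.1 hi)) _, prod_const,
      Nat.cast_pow, Nat.cast_ofNat]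
  · push Not at h
    obtain ⟨i, hi, hdvd⟩ := h
    rw [prod_eq_zero (Multiset.mem_toFinset.2 hi) (indicator_of_notMem (not_not_intro hdvd) _),
      Nat.cast_zero]

theorem hasProd_overpartitionSeries [TopologicalSpace R] [IsTopologicalRing R] [T2Space R]
    (S : Set ℕ) :
    HasProd (fun i ↦ S.mulIndicator (overpartitionFactor R) (i + 1)) (overpartitionSeries R S) := by
  refine (Nat.Partition.hasProd_genFun fun i _ ↦ S.indicator (fun _ ↦ (2 : R)) i).congr_fun
    fun i ↦ ?_
  by_cases hi : i + 1 ∈ S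
  · simp only [mulIndicator_of_mem hi, indicator_of_mem hi,
      one_add_tsum_two_smul_X_pow i.succ_ne_zero]
  · simp only [mulIndicator_of_notMem hi, indicator_of_notMem hi, zero_smul, tsum_zero, add_zero]

theorem overpartitionSeries_empty : overpartitionSeries R ∅ = 1 := by
  let _ : TopologicalSpace R := ⊥
  have : DiscreteTopology R := ⟨rfl⟩
  refine (hasProd_overpartitionSeries ∅).unique ?_
  simpa only [mulIndicator_empty] using hasProd_one

theorem overpartitionSeries_union_mul_inter (S T : Set ℕ) :
    overpartitionSeries R (S ∪ T) * overpartitionSeries R (S ∩ T)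
      = overpartitionSeries R S * overpartitionSeries R T := by
  let _ : TopologicalSpace R := ⊥
  have : DiscreteTopology R := ⟨rfl⟩
  have h := (hasProd_overpartitionSeries (R := R) (S ∪ T)).mul
    (hasProd_overpartitionSeries (S ∩ T))
  simp only [mulIndicator_union_mul_inter_apply] at h
  exact h.unique ((hasProd_overpartitionSeries S).mul (hasProd_overpartitionSeries T))

theorem overpartitionSeries_mul_compl (S : Set ℕ) :
    overpartitionSeries R S * overpartitionSeries R Sᶜ = overpartitionSeries R univ := by
  rw [← overpartitionSeries_union_mul_inter, union_compl_self, inter_compl_self,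
    overpartitionSeries_empty, mul_one]

theorem expand_overpartitionSeries_univ {d : ℕ} (hd : d ≠ 0) :
    expand d hd (overpartitionSeries R univ) = overpartitionSeries R {i | d ∣ i} := by
  let _ : TopologicalSpace R := ⊥
  have : DiscreteTopology R := ⟨rfl⟩
  have hshift (i : ℕ) : d * (i + 1) - 1 + 1 = d * (i + 1) :=
    Nat.sub_add_cancel (Nat.mul_pos (Nat.pos_of_ne_zero hd) i.succ_pos)
  have hinj : Function.Injective fun i : ℕ ↦ d * (i + 1) - 1 := fun i j hij ↦ by
    have := congrArg (· + 1) hij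
    simpa only [hshift, mul_right_inj' hd, add_left_inj] using this
  have hrange (j : ℕ) (hj : j ∉ range fun i ↦ d * (i + 1) - 1) :
      {i | d ∣ i}.mulIndicator (overpartitionFactor R) (j + 1) = 1 := by
    refine mulIndicator_of_notMem (fun hdvd ↦ ?_) _
    obtain ⟨m, hm⟩ := hdvd
    obtain ⟨i, rfl⟩ := Nat.exists_eq_add_one_of_ne_zero
      (right_ne_zero_of_mul (hm ▸ j.add_one_ne_zero))
    exact hj ⟨i, (congrArg (· - 1) hm).symm⟩
  have hmultiples := (hinj.hasProd_iff hrange).2 (hasProd_overpartitionSeries {i | d ∣ i})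
  have hall := (hasProd_overpartitionSeries (R := R) univ).map (expand d hd) (continuous_expand hd)
  refine hall.unique (hmultiples.congr_fun fun i ↦ ?_)
  have hmem : d * (i + 1) ∈ {i | d ∣ i} := dvd_mul_right d _
  rw [Function.comp_apply, Function.comp_apply, hshift, mulIndicator_of_mem hmem,
    mulIndicator_univ, expand_overpartitionFactor hd i.succ_ne_zero]

theorem rescale_neg_one_overpartitionSeries_univ_mul :
    rescale (-1) (overpartitionSeries R univ) * overpartitionSeries R univ
      = overpartitionSeries R {i | 2 ∣ i} ^ 2 := by
  let _ : TopologicalSpace R := ⊥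
  have : DiscreteTopology R := ⟨rfl⟩
  have huniv := hasProd_overpartitionSeries (R := R) univ
  have heven := hasProd_overpartitionSeries (R := R) {i | 2 ∣ i}
  rw [sq]
  refine ((huniv.map (rescale (-1)) (continuous_rescale (-1))).mul huniv).unique
    ((heven.mul heven).congr_fun fun i ↦ ?_)
  rw [Function.comp_apply, mulIndicator_univ]
  by_cases hi : i + 1 ∈ {i | 2 ∣ i}
  · rw [mulIndicator_of_mem hi, rescale_neg_one_overpartitionFactor_of_even i.succ_ne_zero
      (even_iff_two_dvd.2 hi)]
  · rw [mulIndicator_of_notMem hi, mul_one, rescale_neg_one_overpartitionFactor_mul_of_odd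
      (Nat.not_even_iff_odd.1 (mt even_iff_two_dvd.1 hi))]

theorem rescale_neg_one_theta_mul_overpartitionSeries_univ :
    rescale (-1) (theta R) * overpartitionSeries R univ = 1 := by
  let _ : TopologicalSpace R := ⊥
  have : DiscreteTopology R := ⟨rfl⟩
  have hlim := (hasProd_overpartitionSeries (R := R) univ).tendsto_prod_nat.const_mul
    (rescale (-1) (theta R))
  refine tendsto_nhds_unique hlim (tendsto_of_X_pow_succ_dvd_sub fun n ↦ ?_)
  simp only [mulIndicator_univ]
  have hpartial : (∏ i ∈ range n, overpartitionFactor R (i + 1)) * ∏ i ∈ range n, (1 - X ^ (i + 1))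
      = ∏ i ∈ range n, (1 + X ^ (i + 1)) := by
    rw [← prod_mul_distrib]
    exact prod_congr rfl fun i _ ↦ overpartitionFactor_mul_one_sub i.succ_ne_zero
  have hunit : IsUnit (∏ i ∈ range n, (1 - X ^ (i + 1) : R⟦X⟧)) :=
    IsUnit.prod_iff.2 fun i _ ↦ isUnit_one_sub_X_pow i.succ_ne_zero
  rw [← hunit.dvd_mul_right, sub_mul, one_mul, mul_assoc, hpartial]
  have htheta := (X_pow_succ_dvd_rescale_neg_one_theta_sub (R := R) n).mul_right
    (∏ i ∈ range n, (1 + X ^ (i + 1)))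
  have hgauss := pow_succ_dvd_alternating_sum_pow_sq_mul_prod_sub_prod (X : R⟦X⟧) n
  convert htheta.add hgauss using 1
  ring

theorem theta_mul_rescale_neg_one_theta :
    theta R * rescale (-1) (theta R) = expand 2 two_ne_zero (rescale (-1) (theta R)) ^ 2 := by
  have hU := rescale_neg_one_theta_mul_overpartitionSeries_univ (R := R)
  have hU2 := congrArg (expand 2 two_ne_zero) hU
  have hUneg := congrArg (rescale (-1)) hU
  have hsq := rescale_neg_one_overpartitionSeries_univ_mul (R := R)
  rw [map_mul, map_one, expand_overpartitionSeries_univ] at hU2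
  rw [map_mul, map_one, rescale_rescale, neg_one_mul, neg_neg, rescale_one, RingHom.id_apply]
    at hUneg
  generalize expand 2 two_ne_zero (rescale (-1) (theta R)) = ψ₂ at *
  generalize overpartitionSeries R {i | 2 ∣ i} = U₂ at *
  calc theta R * rescale (-1) (theta R)
      = theta R * rescale (-1) (theta R) * (ψ₂ * U₂) ^ 2 := by rw [hU2, one_pow, mul_one]
    _ = (theta R * rescale (-1) (overpartitionSeries R univ))
          * (rescale (-1) (theta R) * overpartitionSeries R univ) * ψ₂ ^ 2 := by
        rw [mul_pow, ← hsq]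
        ring
    _ = ψ₂ ^ 2 := by rw [hUneg, hU, one_mul, one_mul]

theorem mk_biregOverpartitions_mul_theta {a b : ℕ} (ha : a ≠ 0) (hb : b ≠ 0) (hab : a.Coprime b) :
    (mk fun n ↦ (biregOverpartitions a b n : R)) * rescale (-1) (theta R)
        * expand (a * b) (mul_ne_zero ha hb) (rescale (-1) (theta R))
      = expand a ha (rescale (-1) (theta R)) * expand b hb (rescale (-1) (theta R)) := by
  have hinv := rescale_neg_one_theta_mul_overpartitionSeries_univ (R := R)
  have hinv_expand {d : ℕ} (hd : d ≠ 0) :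
      expand d hd (rescale (-1) (theta R)) * overpartitionSeries R {i | d ∣ i} = 1 := by
    rw [← expand_overpartitionSeries_univ hd, ← map_mul, hinv, map_one]
  have hcompl := overpartitionSeries_mul_compl (R := R) ({i | a ∣ i} ∪ {i | b ∣ i})
  have hsieve := overpartitionSeries_union_mul_inter (R := R) {i | a ∣ i} {i | b ∣ i}
  have hinter : {i | a ∣ i} ∩ {i | b ∣ i} = {i | a * b ∣ i} := by
    ext i
    exact ⟨fun h ↦ hab.mul_dvd_of_dvd_of_dvd h.1 h.2,
      fun h ↦ ⟨dvd_of_mul_right_dvd h, dvd_of_mul_left_dvd h⟩⟩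
  rw [hinter] at hsieve
  rw [mk_biregOverpartitions]
  have hinv_a := hinv_expand ha
  have hinv_b := hinv_expand hb
  have hinv_ab := hinv_expand (mul_ne_zero ha hb)
  generalize overpartitionSeries R ({i | a ∣ i} ∪ {i | b ∣ i})ᶜ = G at *
  generalize overpartitionSeries R ({i | a ∣ i} ∪ {i | b ∣ i}) = V at *
  generalize rescale (-1) (theta R) = ψ at *
  calc G * ψ * expand (a * b) _ ψ
      = G * ψ * expand (a * b) _ ψ * (expand a ha ψ * overpartitionSeries R {i | a ∣ i})
          * (expand b hb ψ * overpartitionSeries R {i | b ∣ i}) := by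
        rw [hinv_a, hinv_b, mul_one, mul_one]
    _ = expand a ha ψ * expand b hb ψ * (ψ * (V * G))
          * (expand (a * b) _ ψ * overpartitionSeries R {i | a * b ∣ i}) := by
        linear_combination -(G * ψ * expand (a * b) _ ψ * expand a ha ψ * expand b hb ψ) * hsieve
    _ = expand a ha ψ * expand b hb ψ := by rw [hcompl, hinv, hinv_ab, mul_one, mul_one]

end OverpartitionSeries

section PrimeCharacteristic
variable {p : ℕ} [hp : Fact p.Prime]

theorem expand_pow_eq_pow (k : ℕ) (f : (ZMod p)⟦X⟧) :
    expand (p ^ k) (pow_ne_zero k hp.out.ne_zero) f = f ^ p ^ k := by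
  have hfrob : iterateFrobenius (ZMod p) p k = RingHom.id _ := by
    rw [iterateFrobenius_eq_pow, ZMod.frobenius_zmod]
    exact one_pow k
  have h := MvPowerSeries.map_iterateFrobenius_expand p hp.out.ne_zero f k
  rw [hfrob, MvPowerSeries.map_id] at h
  exact h

theorem expand_eq_pow (f : (ZMod p)⟦X⟧) : expand p hp.out.ne_zero f = f ^ p := by
  simpa only [pow_one] using expand_pow_eq_pow 1 f

theorem mk_biregOverpartitions_two_prime_pow_mul_theta_pow {k m : ℕ} (hkm : p ^ k = 2 * m + 1) :
    (mk fun n ↦ (biregOverpartitions 2 (p ^ k) n : ZMod p)) * theta (ZMod p) ^ m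
      = rescale (-1) (theta (ZMod p)) ^ m := by
  set G := mk fun n ↦ (biregOverpartitions 2 (p ^ k) n : ZMod p)
  set φ := theta (ZMod p)
  set ψ := rescale (-1) φ
  set ψ₂ := expand 2 two_ne_zero ψ
  have hφψ : φ * ψ = ψ₂ ^ 2 := theta_mul_rescale_neg_one_theta
  have hG : G * ψ * ψ₂ ^ p ^ k = ψ₂ * ψ ^ p ^ k := by
    have hpk : p ^ k ≠ 0 := pow_ne_zero k hp.out.ne_zero
    have h := mk_biregOverpartitions_mul_theta (R := ZMod p) two_ne_zero hpk
      (Nat.coprime_two_left.2 ⟨m, hkm⟩)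
    rwa [expand_mul 2 two_ne_zero _ hpk, expand_pow_eq_pow, map_pow] at h
  have hψ : IsUnit ψ := .of_mul_eq_one _ rescale_neg_one_theta_mul_overpartitionSeries_univ
  have hψ₂ : IsUnit ψ₂ := hψ.map (expand 2 two_ne_zero)
  clear_value G φ ψ₂ ψ
  rw [hkm] at hG
  apply ((hψ₂.mul hψ).mul (hψ.pow m)).mul_right_cancel
  calc G * φ ^ m * (ψ₂ * ψ * ψ ^ m)
      = G * ψ * ψ₂ * (φ * ψ) ^ m := by ring
    _ = G * ψ * ψ₂ ^ (2 * m + 1) := by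
        rw [hφψ]
        ring
    _ = ψ ^ m * (ψ₂ * ψ * ψ ^ m) := by
        rw [hG]
        ring

end PrimeCharacteristic

section SqAddMulSq

theorem sqAddMulSqCount_prime_mul {p d : ℕ} [hp : Fact p.Prime] (h : legendreSym p (-d) = -1)
    (n : ℕ) :
    sqAddMulSqCount d (p * n) = if p ∣ n then sqAddMulSqCount d (n / p) else 0 := by
  have hp0 : (p : ℤ) ≠ 0 := Nat.cast_ne_zero.2 hp.out.ne_zero
  have hdvd {x y : ℤ} (hxy : x ^ 2 + d * y ^ 2 = (p * n : ℕ)) : (p : ℤ) ∣ x ∧ (p : ℤ) ∣ y :=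
    legendreSym.prime_dvd_of_eq_neg_one h ⟨n, by push_cast at hxy; linear_combination hxy⟩
  split_ifs with hpn
  · obtain ⟨m, rfl⟩ := hpn
    rw [Nat.mul_div_cancel_left _ hp.out.pos]
    have hscale (z : ℤ × ℤ) : (p * z.1) ^ 2 + d * (p * z.2) ^ 2 = ((p * (p * m) : ℕ) : ℤ)
        ↔ z.1 ^ 2 + d * z.2 ^ 2 = m := by
      have hleft : (p * z.1) ^ 2 + d * (p * z.2) ^ 2 = p ^ 2 * (z.1 ^ 2 + d * z.2 ^ 2) := by ring
      have hright : ((p * (p * m) : ℕ) : ℤ) = p ^ 2 * m := by push_cast; ring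
      rw [hleft, hright, mul_right_inj' (pow_ne_zero 2 hp0)]
    refine (Nat.card_congr (.ofBijective
      (fun z ↦ ⟨(p * z.1.1, p * z.1.2), (hscale z.1).2 z.2⟩) ⟨fun z w hzw ↦ ?_, ?_⟩)).symm
    · simpa only [Subtype.ext_iff, Prod.ext_iff, mul_right_inj' hp0] using hzw
    · rintro ⟨⟨x, y⟩, hxy⟩
      obtain ⟨⟨u, rfl⟩, ⟨v, rfl⟩⟩ := hdvd hxy
      exact ⟨⟨(u, v), (hscale (u, v)).1 hxy⟩, rfl⟩
  · have : IsEmpty {z : ℤ × ℤ // z.1 ^ 2 + d * z.2 ^ 2 = (p * n : ℕ)} := ⟨fun z ↦ hpn ?_⟩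
    · exact Nat.card_of_isEmpty
    obtain ⟨⟨u, hu⟩, ⟨v, hv⟩⟩ := hdvd z.2
    have hz := z.2
    rw [hu, hv] at hz
    zify
    exact ⟨u ^ 2 + d * v ^ 2, mul_left_cancel₀ hp0 (by push_cast at hz; linear_combination -hz)⟩

theorem sqAddMulSqCount_prime_sq_mul {p d : ℕ} [hp : Fact p.Prime] (h : legendreSym p (-d) = -1)
    (n : ℕ) : sqAddMulSqCount d (p ^ 2 * n) = sqAddMulSqCount d n := by
  rw [sq, mul_assoc, sqAddMulSqCount_prime_mul h, if_pos (dvd_mul_right p n),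
    Nat.mul_div_cancel_left _ hp.out.pos]

theorem legendreSym_neg_three {p : ℕ} [Fact p.Prime] (hp : p ≠ 2) :
    legendreSym p (-3) = legendreSym 3 p := by
  have hreciprocity := legendreSym.quadratic_reciprocity' (p := 3) (q := p) (by decide) hp
  have hodd := (Fact.out : p.Prime).eq_two_or_odd.resolve_left hp
  rw [neg_eq_neg_one_mul, legendreSym.mul, legendreSym.at_neg_one hp, ZMod.χ₄_eq_neg_one_pow hodd]
  rw [Nat.cast_ofNat, show 3 / 2 = 1 from rfl, one_mul] at hreciprocity
  rw [hreciprocity, ← mul_assoc, ← mul_pow, neg_one_mul, neg_neg, one_pow, one_mul]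

theorem legendreSym_neg_three_of_mod_six_eq_five {p : ℕ} [Fact p.Prime] (hp : p % 6 = 5) :
    legendreSym p (-3) = -1 := by
  rw [legendreSym_neg_three (by omega), legendreSym.mod, show (p : ℤ) % (3 : ℕ) = 2 by omega]
  decide

theorem prime_dvd_natCard_of_pow_eq_one {α : Type*} {p : ℕ} [Fact p.Prime] {σ : Equiv.Perm α}
    (hσ : σ ^ p = 1) (hfix : ∀ a, σ a ≠ a) : p ∣ Nat.card α := by
  rcases finite_or_infinite α with hfinite | hinfinite
  · have := Fintype.ofFinite α
    rw [Nat.card_eq_fintype_card]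
    by_contra hcard
    obtain ⟨a, ha⟩ := Equiv.Perm.exists_fixed_point_of_prime (n := 1) hcard (by rwa [pow_one])
    exact hfix a ha
  · rw [Nat.card_eq_zero_of_infinite]
    exact dvd_zero p

theorem three_dvd_natCard_sq_add_mul_add_sq {P : ℤ → Prop} (hP : ¬P 0) :
    3 ∣ Nat.card {z : ℤ × ℤ // P (z.1 ^ 2 + z.1 * z.2 + z.2 ^ 2)} := by
  let rotation : ℤ × ℤ ≃ ℤ × ℤ :=
    { toFun z := (z.2, -z.1 - z.2)
      invFun z := (-z.1 - z.2, z.1)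
      left_inv z := Prod.ext (by ring) rfl
      right_inv z := Prod.ext rfl (by ring) }
  have hnorm (z : ℤ × ℤ) : P (z.1 ^ 2 + z.1 * z.2 + z.2 ^ 2) ↔
      P ((rotation z).1 ^ 2 + (rotation z).1 * (rotation z).2 + (rotation z).2 ^ 2) := by
    simp only [rotation, Equiv.coe_fn_mk]
    ring_nf
  refine prime_dvd_natCard_of_pow_eq_one (σ := rotation.subtypeEquiv hnorm) ?_ ?_
  · refine Equiv.ext fun z ↦ Subtype.ext ?_
    simp only [rotation, pow_succ, pow_zero, one_mul, Equiv.Perm.mul_apply,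
      Equiv.subtypeEquiv_apply, Equiv.coe_fn_mk, Equiv.Perm.one_apply]
    exact Prod.ext (by ring) (by ring)
  · rintro ⟨⟨x, y⟩, hxy⟩ hfix
    obtain ⟨hx, hy⟩ := Prod.ext_iff.1 (Subtype.ext_iff.1 hfix)
    simp only [rotation, Equiv.subtypeEquiv_apply, Equiv.coe_fn_mk] at hx hy
    obtain rfl : x = 0 := by omega
    obtain rfl : y = 0 := by omega
    exact hP hxy

theorem three_dvd_sqAddMulSqCount_three_of_even {n : ℕ} (hn : n ≠ 0) (he : Even n) :
    3 ∣ sqAddMulSqCount 3 n := by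
  have hne : ¬4 * (0 : ℤ) = n := by
    rw [mul_zero]
    exact_mod_cast hn.symm
  have hform (z : ℤ × ℤ) : (2 * z.1 + z.2) ^ 2 + (3 : ℕ) * z.2 ^ 2
      = 4 * (z.1 ^ 2 + z.1 * z.2 + z.2 ^ 2) := by
    push_cast
    ring
  suffices hcard : Nat.card {z : ℤ × ℤ // 4 * (z.1 ^ 2 + z.1 * z.2 + z.2 ^ 2) = n}
      = sqAddMulSqCount 3 n from
    hcard ▸ three_dvd_natCard_sq_add_mul_add_sq (P := fun m ↦ 4 * m = n) hne
  refine Nat.card_congr (.ofBijective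
    (fun z ↦ ⟨(2 * z.1.1 + z.1.2, z.1.2), (hform z.1).trans z.2⟩) ⟨fun z w hzw ↦ ?_, ?_⟩)
  · obtain ⟨h₁, h₂⟩ := Prod.ext_iff.1 (Subtype.ext_iff.1 hzw)
    exact Subtype.ext (Prod.ext (by dsimp only at h₁ h₂; omega) h₂)
  · rintro ⟨⟨x, y⟩, hxy : x ^ 2 + (3 : ℕ) * y ^ 2 = n⟩
    have hparity : Even (x - y) := by
      have h : Even (x ^ 2 + (3 : ℕ) * y ^ 2) := hxy ▸ (Int.even_coe_nat n).2 he
      have hthree : ¬Even (3 : ℤ) := by decide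
      simpa only [Nat.cast_ofNat, Int.even_sub, Int.even_add, Int.even_mul, hthree, false_or,
        Int.even_pow' two_ne_zero] using h
    obtain ⟨s, hs⟩ := hparity
    obtain rfl : x = 2 * s + y := by omega
    exact ⟨⟨(s, y), (hform (s, y)).symm.trans hxy⟩, rfl⟩

end SqAddMulSq

section ModThree

theorem coeff_theta_pow_four (n : ℕ) :
    coeff n (theta (ZMod 3) ^ 4) = (sqAddMulSqCount 3 n : ZMod 3) := by
  rw [pow_succ', ← expand_eq_pow, coeff_theta_mul_expand_theta]

theorem theta_pow_four_add_rescale_neg_one_theta_pow_four :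
    theta (ZMod 3) ^ 4 + rescale (-1) (theta (ZMod 3)) ^ 4 = -1 := by
  rw [← map_pow]
  ext n
  rw [map_add, coeff_rescale, map_neg, coeff_one]
  rcases eq_or_ne n 0 with rfl | hn
  · rw [coeff_zero_eq_constantCoeff_apply, map_pow, constantCoeff_theta, if_pos rfl]
    decide
  rw [if_neg hn, neg_zero, coeff_theta_pow_four]
  rcases n.even_or_odd with he | ho
  · rw [(ZMod.natCast_eq_zero_iff _ _).2 (three_dvd_sqAddMulSqCount_three_of_even hn he)]
    ring
  · rw [ho.neg_one_pow]
    ring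

theorem coeff_three_mul_theta_sq (n : ℕ) :
    coeff (3 * n) (theta (ZMod 3) ^ 2) = coeff n (theta (ZMod 3) ^ 6) := by
  have hcoeff (m : ℕ) : coeff m (theta (ZMod 3) ^ 2) = (sqAddMulSqCount 1 m : ZMod 3) := by
    rw [sq, ← coeff_theta_mul_expand_theta one_ne_zero, expand_one_apply]
  have hlegendre : legendreSym 3 (-(1 : ℕ)) = -1 := by decide
  rw [show 6 = 2 * 3 from rfl, pow_mul, ← expand_eq_pow, coeff_expand, hcoeff, hcoeff,
    sqAddMulSqCount_prime_mul hlegendre, Nat.cast_ite, Nat.cast_zero]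

theorem biregOverpartitions_two_nine_three_mul {n : ℕ} (hn : n ≠ 0) :
    (biregOverpartitions 2 9 (3 * n) : ZMod 3) = -sqAddMulSqCount 3 n := by
  set G := mk fun n ↦ (biregOverpartitions 2 9 n : ZMod 3) with hGdef
  set φ := theta (ZMod 3)
  have hφ : IsUnit φ := isUnit_iff_constantCoeff.2 (constantCoeff_theta (R := ZMod 3) ▸ isUnit_one)
  have hG : G * φ ^ 4 = rescale (-1) φ ^ 4 :=
    mk_biregOverpartitions_two_prime_pow_mul_theta_pow (p := 3) (k := 2) rfl
  have hdissect : (G + 1) * expand 3 three_ne_zero (φ ^ 2) = -φ ^ 2 := by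
    have hexpand : expand 3 three_ne_zero (φ ^ 2) = (φ ^ 2) ^ 3 := expand_eq_pow _
    rw [hexpand]
    linear_combination φ ^ 2 * (hG + theta_pow_four_add_rescale_neg_one_theta_pow_four)
  have hsection : (mk fun m ↦ coeff (3 * m) (G + 1)) = -φ ^ 4 := by
    apply (hφ.pow 2).mul_right_cancel
    ext m
    rw [← coeff_mul_expand three_ne_zero, hdissect, map_neg, coeff_three_mul_theta_sq, neg_mul,
      map_neg, ← pow_add]
  have hcoeff := congrArg (coeff n) hsection
  rwa [coeff_mk, map_neg, coeff_theta_pow_four, map_add, hGdef, coeff_mk, coeff_one,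
    if_neg (mul_ne_zero three_ne_zero hn), add_zero] at hcoeff

theorem B29_mult_mod3_general (p : ℕ) (hp : p.Prime) (hp5 : p % 6 = 5) (m : ℕ) :
    (biregOverpartitions 2 9 (3 * (p ^ 2 * m)) : ℤ) ≡
      -(p : ℤ) * biregOverpartitions 2 9 (3 * m) [ZMOD 3] := by
  have : Fact p.Prime := ⟨hp⟩
  have hmod : p ≡ 2 [MOD 3] := (by omega : p % 3 = 2)
  have hpmod : (p : ZMod 3) = -1 := (ZMod.natCast_eq_natCast_iff p 2 3).2 hmod
  refine (ZMod.intCast_eq_intCast_iff _ _ 3).1 ?_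
  push_cast
  rw [hpmod, neg_neg, one_mul]
  rcases eq_or_ne m 0 with rfl | hm
  · rw [mul_zero]
  · rw [biregOverpartitions_two_nine_three_mul (mul_ne_zero (pow_ne_zero 2 hp.ne_zero) hm),
      biregOverpartitions_two_nine_three_mul hm,
      sqAddMulSqCount_prime_sq_mul (legendreSym_neg_three_of_mod_six_eq_five hp5)]

end ModThree

theorem B29_mult_mod3 (k : ℕ) (hk : 0 < k) (p : ℕ) (hp : p.Prime) (hp5 : p % 6 = 5)
    (r : ℕ) (hr : p ∣ 6 * r + 5) (n : ℕ) :
    (biregOverpartitions 2 9 (18 * p ^ (k + 1) * n + 18 * p * r + 15 * p) : ℤ) ≡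
      -(p : ℤ) * biregOverpartitions 2 9 (18 * p ^ (k - 1) * n + (18 * r + 15) / p) [ZMOD 3] := by
  obtain ⟨s, hs⟩ := hr
  obtain ⟨l, rfl⟩ := Nat.exists_eq_add_one_of_ne_zero hk.ne'
  have hdiv : (18 * r + 15) / p = 3 * s := by
    rw [show 18 * r + 15 = p * (3 * s) by linarith, Nat.mul_div_cancel_left _ hp.pos]
  rw [hdiv, Nat.add_sub_cancel, show 18 * p ^ l * n + 3 * s = 3 * (6 * p ^ l * n + s) by ring,
    show 18 * p ^ (l + 1 + 1) * n + 18 * p * r + 15 * p = 3 * (p ^ 2 * (6 * p ^ l * n + s)) by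
      linear_combination (3 * p) * hs]
  exact B29_mult_mod3_general p hp hp5 (6 * p ^ l * n + s)
end

section
/- Let k ≥ 0 and n ≥ 0 be integers, and let p₁, p₂, …, p_{k+1} be odd primes with pᵢ ≢ 1 (mod 4) for each 1 ≤ i ≤ k+1. Then for every positive integer j with j ≢ 0 (mod p_{k+1}), we have B̄_{5,2}( 4·p₁²p₂²⋯p_k²p_{k+1}²·n + (4j + p_{k+1})·p₁²p₂²⋯p_k²·p_{k+1} ) ≡ 0 (mod 4). -/
/-!
A partition with `r` distinct part sizes carries `2 ^ r` overlinings, so modulo `4` only the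
partitions of `N` into equal parts survive: the count is twice the number of divisors of `N`
divisible by neither `l1` nor `l2`. If a prime `q ∤ l1 l2` divides `N` to an odd exponent `e`, then
multiplying by powers of `q` does not affect this condition, so the admissible divisors fall into
classes of the even size `e + 1`. For the arguments in the theorem the last prime of the family is
such a `q`.
-/

open Finset

section EqualParts

variable {n d : ℕ}

/-- The partition of `n` into equal parts `d`, available for each divisor `d` of `n`. -/
@[simps]
def equalPartsPartition (hd : d ∈ n.divisors) : n.Partition where
  parts := Multiset.replicate (n / d) d
  parts_pos hi := by
    rw [Multiset.eq_of_mem_replicate hi]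
    exact Nat.pos_of_mem_divisors hd
  parts_sum := by
    rw [Multiset.sum_replicate, smul_eq_mul, Nat.div_mul_cancel (Nat.dvd_of_mem_divisors hd)]

lemma toFinset_parts_equalPartsPartition (hd : d ∈ n.divisors) :
    (equalPartsPartition hd).parts.toFinset = {d} := by
  have hquot : n / d ≠ 0 :=
    (Nat.div_pos (Nat.divisor_le hd) (Nat.pos_of_mem_divisors hd)).ne'
  rw [equalPartsPartition_parts, Multiset.toFinset_replicate, if_neg hquot]

lemma exists_equalPartsPartition_eq {p : n.Partition} (hp : p.parts.toFinset = {d}) :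
    ∃ hd : d ∈ n.divisors, equalPartsPartition hd = p := by
  obtain ⟨hcard, hparts⟩ := (Multiset.toFinset_eq_singleton_iff _ _).mp hp
  rw [Multiset.nsmul_singleton] at hparts
  have hd_pos : 0 < d :=
    p.parts_pos (Multiset.mem_toFinset.mp (hp ▸ mem_singleton_self d))
  have hsum : p.parts.card * d = n := by
    rw [← smul_eq_mul, ← Multiset.sum_replicate, ← hparts, p.parts_sum]
  have hn : n ≠ 0 := hsum ▸ mul_ne_zero hcard hd_pos.ne'
  refine ⟨Nat.mem_divisors.mpr ⟨Dvd.intro_left _ hsum, hn⟩, Nat.Partition.ext ?_⟩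
  rw [equalPartsPartition_parts, Nat.div_eq_of_eq_mul_left hd_pos hsum.symm, ← hparts]

lemma card_restricted_filter_card_toFinset_eq_one (n : ℕ) (P : ℕ → Prop) [DecidablePred P] :
    #{p ∈ Nat.Partition.restricted n P | #p.parts.toFinset = 1} = #{d ∈ n.divisors | P d} := by
  symm
  refine card_bij (fun d hd => equalPartsPartition (mem_filter.mp hd).1) ?maps ?inj ?surj
  case maps =>
    intro d hd
    obtain ⟨hdn, hPd⟩ := mem_filter.mp hd
    have hsize := toFinset_parts_equalPartsPartition hdn
    refine mem_filter.mpr ⟨mem_filter.mpr ⟨mem_univ _, fun x hx => ?_⟩, ?_⟩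
    · rwa [Multiset.eq_of_mem_replicate hx]
    · rw [hsize, card_singleton]
  case inj =>
    intro d hd e he heq
    rw [← singleton_inj, ← toFinset_parts_equalPartsPartition (mem_filter.mp hd).1, heq,
      toFinset_parts_equalPartsPartition]
  case surj =>
    intro p hp
    obtain ⟨hres, hcard⟩ := mem_filter.mp hp
    obtain ⟨d, hd⟩ := card_eq_one.mp hcard
    obtain ⟨hdn, rfl⟩ := exists_equalPartsPartition_eq hd
    have hPd : P d :=
      (mem_filter.mp hres).2 d (Multiset.mem_toFinset.mp (hd ▸ mem_singleton_self d))
    exact ⟨d, mem_filter.mpr ⟨hdn, hPd⟩, rfl⟩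

end EqualParts

section ModFour

lemma two_pow_modEq_four_of_ne_zero {r : ℕ} (hr : r ≠ 0) :
    2 ^ r ≡ 2 * (if r = 1 then 1 else 0) [MOD 4] := by
  split_ifs with h
  · rw [h, pow_one, mul_one]
  · exact Nat.modEq_zero_iff_dvd.mpr (pow_dvd_pow 2 (by lia : 2 ≤ r))

lemma card_toFinset_parts_ne_zero {n : ℕ} (hn : n ≠ 0) (p : n.Partition) :
    #p.parts.toFinset ≠ 0 := by
  rw [card_ne_zero, Multiset.toFinset_nonempty]
  intro h
  exact hn (by rw [← p.parts_sum, h, Multiset.sum_zero])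

lemma biregOverpartitions_modEq_four (l1 l2 : ℕ) {n : ℕ} (hn : n ≠ 0) :
    biregOverpartitions l1 l2 n ≡ 2 * #{d ∈ n.divisors | ¬ l1 ∣ d ∧ ¬ l2 ∣ d} [MOD 4] := by
  rw [← card_restricted_filter_card_toFinset_eq_one, card_filter, mul_sum, biregOverpartitions,
    ← sum_filter]
  exact Nat.ModEq.sum fun p _ => two_pow_modEq_four_of_ne_zero (card_toFinset_parts_ne_zero hn p)

end ModFour

section Divisors

lemma card_divisors_mul_filter {a m : ℕ} (ham : a.Coprime m) (P : ℕ → Prop) [DecidablePred P]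
    (hP : ∀ x, x ∣ a → ∀ y, P (x * y) ↔ P y) :
    #{d ∈ (a * m).divisors | P d} = #a.divisors * #{d ∈ m.divisors | P d} := by
  have himage : {d ∈ (a * m).divisors | P d} =
      (a.divisors ×ˢ {d ∈ m.divisors | P d}).image fun z => z.1 * z.2 := by
    rw [Nat.divisors_mul, mul_def, filter_image, ← filter_product_right]
    congr 1
    refine filter_congr fun z hz => hP z.1 ?_ z.2
    exact Nat.dvd_of_mem_divisors (mem_product.mp hz).1
  rw [himage, card_image_of_injOn, card_product]
  exact ham.mul_injOn_divisors.mono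
    (coe_subset.mpr (product_subset_product_right (filter_subset _ _)))

lemma even_card_divisors_filter_not_dvd {l1 l2 q n : ℕ} (h1 : q.Coprime l1) (h2 : q.Coprime l2)
    (hodd : Odd (n.factorization q)) : Even #{d ∈ n.divisors | ¬ l1 ∣ d ∧ ¬ l2 ∣ d} := by
  have hmem : q ∈ n.primeFactors := by
    rw [← Nat.support_factorization, Finsupp.mem_support_iff]
    exact hodd.pos.ne'
  have hq : q.Prime := Nat.prime_of_mem_primeFactors hmem
  have hn : n ≠ 0 := (Nat.mem_primeFactors.mp hmem).2.2
  have hcoprime : (ordProj[q] n).Coprime (ordCompl[q] n) :=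
    (Nat.coprime_ordCompl hq hn).pow_left _
  have hcard : #(ordProj[q] n).divisors = n.factorization q + 1 := by
    rw [Nat.divisors_prime_pow hq, card_map, card_range]
  have hnot_dvd_iff : ∀ l, q.Coprime l → ∀ x, x ∣ ordProj[q] n → ∀ y, ¬ l ∣ x * y ↔ ¬ l ∣ y :=
    fun l hl x hx y => not_congr
      ((hl.pow_left _).coprime_dvd_left hx).symm.dvd_mul_left
  rw [← Nat.ordProj_mul_ordCompl_eq_self n q, card_divisors_mul_filter hcoprime _ fun x hx y =>
    and_congr (hnot_dvd_iff l1 h1 x hx y) (hnot_dvd_iff l2 h2 x hx y), hcard]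
  exact hodd.add_one.mul_right _

end Divisors

theorem four_dvd_biregOverpartitions_of_odd_factorization {l1 l2 q n : ℕ} (h1 : q.Coprime l1)
    (h2 : q.Coprime l2) (hodd : Odd (n.factorization q)) : 4 ∣ biregOverpartitions l1 l2 n := by
  have hn : n ≠ 0 := by
    rintro rfl
    simp at hodd
  rw [(biregOverpartitions_modEq_four l1 l2 hn).dvd_iff dvd_rfl]
  exact mul_dvd_mul_left 2 (even_card_divisors_filter_not_dvd h1 h2 hodd).two_dvd

lemma odd_factorization_sq_mul_mul {q m u : ℕ} (hq : q.Prime) (hm : m ≠ 0) (hu : ¬ q ∣ u) :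
    Odd ((m ^ 2 * q * u).factorization q) := by
  have hu0 : u ≠ 0 := fun h => hu (h ▸ dvd_zero q)
  have hm2 : m ^ 2 ≠ 0 := pow_ne_zero 2 hm
  rw [Nat.factorization_mul (mul_ne_zero hm2 hq.ne_zero) hu0,
    Nat.factorization_mul hm2 hq.ne_zero, Nat.factorization_pow, Finsupp.add_apply,
    Finsupp.add_apply, Finsupp.smul_apply, hq.factorization_self,
    Nat.factorization_eq_zero_of_not_dvd hu]
  exact ⟨m.factorization q, rfl⟩

theorem B52_inf_family_mod4_general {l1 l2 c : ℕ} (k n : ℕ) (p : Fin (k + 1) → ℕ)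
    (hp : ∀ i, p i ≠ 0) (hprime : (p (Fin.last k)).Prime) (h1 : (p (Fin.last k)).Coprime l1)
    (h2 : (p (Fin.last k)).Coprime l2) (hc : (p (Fin.last k)).Coprime c)
    (j : ℕ) (hj : ¬ p (Fin.last k) ∣ j) :
    4 ∣ biregOverpartitions l1 l2
      (c * (∏ i, p i ^ 2) * n +
        (c * j + p (Fin.last k)) * (∏ i : Fin k, p i.castSucc ^ 2) * p (Fin.last k)) := by
  have hm : ∏ i : Fin k, p i.castSucc ≠ 0 := prod_ne_zero_iff.mpr fun i _ => hp i.castSucc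
  rw [Fin.prod_univ_castSucc, prod_pow]
  generalize ∏ i : Fin k, p i.castSucc = m at hm ⊢
  generalize p (Fin.last k) = q at hprime h1 h2 hc hj ⊢
  have hcofactor : ¬ q ∣ c * j + q * (c * n + 1) := by
    rwa [Nat.dvd_add_left (dvd_mul_right _ _), hc.dvd_mul_left]
  have hfactor : c * (m ^ 2 * q ^ 2) * n + (c * j + q) * m ^ 2 * q =
      m ^ 2 * q * (c * j + q * (c * n + 1)) := by ring
  rw [hfactor]
  exact four_dvd_biregOverpartitions_of_odd_factorization h1 h2
    (odd_factorization_sq_mul_mul hprime hm hcofactor)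

theorem B52_inf_family_mod4 (k n : ℕ) (p : Fin (k + 2) → ℕ)
    (hp : ∀ i, (p i).Prime ∧ Odd (p i) ∧ p i % 4 ≠ 1)
    (j : ℕ) (hj : 0 < j) (hjp : ¬ p (Fin.last (k + 1)) ∣ j) :
    4 ∣ biregOverpartitions 5 2
      (4 * (∏ i, p i ^ 2) * n +
        (4 * j + p (Fin.last (k + 1))) * (∏ i : Fin (k + 1), p i.castSucc ^ 2) *
          p (Fin.last (k + 1))) := by
  obtain ⟨hprime, hodd, hmod⟩ := hp (Fin.last (k + 1))
  have h5 : (p (Fin.last (k + 1))).Coprime 5 :=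
    (Nat.coprime_primes hprime Nat.prime_five).mpr fun h => hmod (by rw [h])
  exact B52_inf_family_mod4_general (k + 1) n p (fun i => (hp i).1.ne_zero) hprime h5
    hodd.coprime_two_right (hodd.coprime_two_right.pow_right 2) j hjp
end

section
/- For all integers n ≥ 0, the number of (5,4)-biregular overpartitions of 4n+3 satisfies B̄_{5,4}(4n+3) ≡ 0 (mod 4). -/
/-!
An overpartition with `k` distinct part sizes is one of `2 ^ k` over the same partition, so modulo
`4` only the partitions into equal parts matter, and those correspond to divisors. It remains to
count, modulo `2`, the divisors of `N ≡ 3 [MOD 4]` divisible by neither `l1` nor `l2`. By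
inclusion–exclusion this is an alternating sum of numbers of divisors of quotients `N / m`, where
`m` is odd and `m ≢ 3 [MOD 4]`; each quotient is again `3` modulo `4`, hence not a square.
-/

open Finset

section Divisors

theorem even_card_divisors_of_not_isSquare {m : ℕ} (hm : ¬IsSquare m) : Even #m.divisors := by
  have hm0 : m ≠ 0 := by
    rintro rfl
    exact hm IsSquare.zero
  have card_eq_zero : ∑ _d ∈ m.divisors, (1 : ZMod 2) = 0 := by
    refine sum_involution (fun d _ ↦ m / d) (fun _ _ ↦ by decide) (fun d hd _ hdd ↦ hm ⟨d, ?_⟩)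
      (fun d hd ↦ Nat.mem_divisors.2 ⟨Nat.div_dvd_of_dvd (Nat.dvd_of_mem_divisors hd), hm0⟩)
      (fun d hd ↦ Nat.div_div_self (Nat.dvd_of_mem_divisors hd) hm0)
    simpa only [hdd] using (Nat.div_mul_cancel (Nat.dvd_of_mem_divisors hd)).symm
  rwa [sum_const, nsmul_one, ZMod.natCast_eq_zero_iff_even] at card_eq_zero

theorem not_isSquare_of_mod_four_eq_three {m : ℕ} (hm : m % 4 = 3) : ¬IsSquare m := by
  rintro ⟨r, rfl⟩
  have hr : r % 4 < 4 := Nat.mod_lt _ (by norm_num)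
  rw [Nat.mul_mod] at hm
  interval_cases r % 4 <;> omega

theorem card_filter_dvd_divisors_mul {d : ℕ} (hd : d ≠ 0) (k : ℕ) :
    #{e ∈ (d * k).divisors | d ∣ e} = #k.divisors := by
  have filter_eq_image : {e ∈ (d * k).divisors | d ∣ e} = k.divisors.image (d * ·) := by
    ext e
    simp only [mem_filter, Nat.mem_divisors, mem_image]
    constructor
    · rintro ⟨⟨hdvd, hne⟩, c, rfl⟩
      exact ⟨c, ⟨Nat.dvd_of_mul_dvd_mul_left hd.bot_lt hdvd, right_ne_zero_of_mul hne⟩, rfl⟩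
    · rintro ⟨c, ⟨hdvd, hk⟩, rfl⟩
      exact ⟨⟨Nat.mul_dvd_mul_left d hdvd, mul_ne_zero hd hk⟩, dvd_mul_right d c⟩
  rw [filter_eq_image, card_image_of_injective _ (mul_right_injective₀ hd)]

theorem even_card_divisors_filter_dvd {N l : ℕ} (hN : N % 4 = 3) (hl : l % 4 ≠ 3) :
    Even #{d ∈ N.divisors | l ∣ d} := by
  by_cases hlN : l ∣ N
  · obtain ⟨k, rfl⟩ := hlN
    have hl0 : l ≠ 0 := by
      rintro rfl
      simp at hN
    have hk : k % 4 = 3 := by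
      have hl4 : l % 4 < 4 := Nat.mod_lt _ (by norm_num)
      rw [Nat.mul_mod] at hN
      interval_cases l % 4 <;> omega
    rw [card_filter_dvd_divisors_mul hl0]
    exact even_card_divisors_of_not_isSquare (not_isSquare_of_mod_four_eq_three hk)
  · rw [filter_false_of_mem fun d hd hld ↦ hlN (hld.trans (Nat.dvd_of_mem_divisors hd))]
    exact Even.zero

theorem card_filter_not_and_not_add {α : Type*} (s : Finset α) (p q : α → Prop) [DecidablePred p]
    [DecidablePred q] :
    #{a ∈ s | ¬p a ∧ ¬q a} + (#{a ∈ s | p a} + #{a ∈ s | q a}) =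
      #s + #{a ∈ s | p a ∧ q a} := by
  classical
  rw [← card_union_add_card_inter, ← filter_or, ← filter_and, ← add_assoc, add_comm #_ #_,
    ← card_filter_add_card_filter_not (s := s) fun a ↦ p a ∨ q a]
  simp only [not_or]

theorem even_card_divisors_filter_not_dvd_s16 {N l1 l2 : ℕ} (hN : N % 4 = 3) (hl1 : l1 % 4 ≠ 3)
    (hl2 : l2 % 4 ≠ 3) (hcop : l1.Coprime l2) :
    Even #{d ∈ N.divisors | ¬l1 ∣ d ∧ ¬l2 ∣ d} := by
  have hl12 : l1 * l2 % 4 ≠ 3 := by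
    have hl1_lt : l1 % 4 < 4 := Nat.mod_lt _ (by norm_num)
    have hl2_lt : l2 % 4 < 4 := Nat.mod_lt _ (by norm_num)
    rw [Nat.mul_mod]
    interval_cases l1 % 4 <;> interval_cases l2 % 4 <;> omega
  have even_all : Even #N.divisors :=
    even_card_divisors_of_not_isSquare (not_isSquare_of_mod_four_eq_three hN)
  have even_both : Even #{d ∈ N.divisors | l1 ∣ d ∧ l2 ∣ d} := by
    simpa only [← hcop.lcm_eq_mul, Nat.lcm_dvd_iff] using even_card_divisors_filter_dvd hN hl12
  have even_sum := even_all.add even_both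
  rw [← card_filter_not_and_not_add] at even_sum
  exact (Nat.even_add.1 even_sum).2
    ((even_card_divisors_filter_dvd hN hl1).add (even_card_divisors_filter_dvd hN hl2))

end Divisors

section Partitions

variable {N : ℕ}

/-- The partition of `N` into `N / d` equal parts, for a divisor `d` of `N`. -/
def equalParts {d : ℕ} (hd : d ∣ N) : N.Partition :=
  .ofSums N (.replicate (N / d) d) <| by
    rw [Multiset.sum_replicate, smul_eq_mul, Nat.div_mul_cancel hd]

theorem equalParts_parts (hN : N ≠ 0) {d : ℕ} (hd : d ∣ N) :
    (equalParts hd).parts = .replicate (N / d) d := by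
  rw [equalParts, Nat.Partition.ofSums_parts, Multiset.filter_eq_self]
  intro x hx
  rw [Multiset.eq_of_mem_replicate hx]
  exact ne_zero_of_dvd_ne_zero hN hd

theorem equalParts_toFinset_parts (hN : N ≠ 0) {d : ℕ} (hd : d ∣ N) :
    (equalParts hd).parts.toFinset = {d} := by
  have hdiv : N / d ≠ 0 := (Nat.div_ne_zero_iff_of_dvd hd).2 ⟨hN, ne_zero_of_dvd_ne_zero hN hd⟩
  rw [equalParts_parts hN, Multiset.toFinset_replicate, if_neg hdiv]

theorem exists_eq_equalParts (hN : N ≠ 0) {p : N.Partition} (hp : #p.parts.toFinset = 1) :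
    ∃ (d : ℕ) (hd : d ∣ N), p = equalParts hd := by
  obtain ⟨-, d, hparts⟩ := (Multiset.toFinset_card_eq_one_iff _).1 hp
  rw [Multiset.nsmul_singleton] at hparts
  have hsum : p.parts.card * d = N := by
    rw [← smul_eq_mul, ← Multiset.sum_replicate, ← hparts, p.parts_sum]
  have hd : d ∣ N := Dvd.intro_left _ hsum
  have hdiv : N / d = p.parts.card :=
    Nat.div_eq_of_eq_mul_left (ne_zero_of_dvd_ne_zero hN hd).bot_lt hsum.symm
  refine ⟨d, hd, Nat.Partition.ext ?_⟩
  rw [equalParts_parts hN, hdiv, ← hparts]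

theorem card_restricted_filter_card_eq_one (hN : N ≠ 0) (P : ℕ → Prop) [DecidablePred P] :
    #{p ∈ Nat.Partition.restricted N P | #p.parts.toFinset = 1} = #{d ∈ N.divisors | P d} := by
  have mem_parts {d : ℕ} (hd : d ∣ N) (x : ℕ) : x ∈ (equalParts hd).parts ↔ x = d := by
    rw [← Multiset.mem_toFinset, equalParts_toFinset_parts hN, mem_singleton]
  symm
  refine card_bij (fun d hd ↦ equalParts (Nat.dvd_of_mem_divisors (mem_filter.1 hd).1)) ?_ ?_ ?_
  · intro d hd
    simpa [Nat.Partition.restricted, mem_parts, equalParts_toFinset_parts hN]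
      using (mem_filter.1 hd).2
  · intro d _ e _ hde
    simpa only [equalParts_toFinset_parts hN, singleton_inj]
      using congrArg (·.parts.toFinset) hde
  · intro p hp
    simp only [Nat.Partition.restricted, mem_filter, mem_univ, true_and] at hp
    obtain ⟨d, hd, rfl⟩ := exists_eq_equalParts hN hp.2
    exact ⟨d, mem_filter.2 ⟨Nat.mem_divisors.2 ⟨hd, hN⟩, hp.1 d ((mem_parts hd d).2 rfl)⟩, rfl⟩

theorem toFinset_parts_nonempty (hN : N ≠ 0) (p : N.Partition) : p.parts.toFinset.Nonempty := by
  rw [Multiset.toFinset_nonempty]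
  intro h
  exact hN (by rw [← p.parts_sum, h, Multiset.sum_zero])

theorem sum_two_pow_card_toFinset_modEq (hN : N ≠ 0) (s : Finset N.Partition) :
    ∑ p ∈ s, 2 ^ #p.parts.toFinset ≡ 2 * #{p ∈ s | #p.parts.toFinset = 1} [MOD 4] := by
  have one_size : ∑ p ∈ s with #p.parts.toFinset = 1, 2 ^ #p.parts.toFinset =
      2 * #{p ∈ s | #p.parts.toFinset = 1} := by
    rw [sum_congr rfl fun p hp ↦ by rw [(mem_filter.1 hp).2, pow_one], sum_const, smul_eq_mul,
      mul_comm]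
  have more_sizes : 4 ∣ ∑ p ∈ s with ¬#p.parts.toFinset = 1, 2 ^ #p.parts.toFinset := by
    refine dvd_sum fun p hp ↦ pow_dvd_pow 2 (m := 2) ?_
    have hpos := (toFinset_parts_nonempty hN p).card_pos
    have hne := (mem_filter.1 hp).2
    omega
  rw [← sum_filter_add_sum_filter_not s fun p ↦ #p.parts.toFinset = 1, one_size]
  exact Nat.ModEq.add_left _ (Nat.modEq_zero_iff_dvd.2 more_sizes)

theorem biregOverpartitions_modEq (l1 l2 : ℕ) (hN : N ≠ 0) :
    biregOverpartitions l1 l2 N ≡ 2 * #{d ∈ N.divisors | ¬l1 ∣ d ∧ ¬l2 ∣ d} [MOD 4] := by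
  rw [biregOverpartitions, ← sum_filter, ← card_restricted_filter_card_eq_one hN]
  exact sum_two_pow_card_toFinset_modEq hN _

end Partitions

theorem B54_mod4_4n3_general {l1 l2 : ℕ} (hl1 : l1 % 4 ≠ 3) (hl2 : l2 % 4 ≠ 3)
    (hcop : l1.Coprime l2) (n : ℕ) : 4 ∣ biregOverpartitions l1 l2 (4 * n + 3) := by
  have heven : Even #{d ∈ (4 * n + 3).divisors | ¬l1 ∣ d ∧ ¬l2 ∣ d} :=
    even_card_divisors_filter_not_dvd_s16 (by omega) hl1 hl2 hcop
  rw [(biregOverpartitions_modEq l1 l2 (by omega)).dvd_iff dvd_rfl]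
  exact Nat.mul_dvd_mul_left 2 heven.two_dvd

theorem B54_mod4_4n3 (n : ℕ) : 4 ∣ biregOverpartitions 5 4 (4 * n + 3) :=
  B54_mod4_4n3_general (by norm_num) (by norm_num) (by norm_num) n
end

section
/- Let t ≥ 2 be an integer. Then for all integers n ≥ 0: B̄_{3,2^t}(16n+6) ≡ 0 (mod 8), B̄_{3,2^t}(16n+10) ≡ 0 (mod 8), and B̄_{3,2^t}(16n+14) ≡ 0 (mod 8). -/
/-! Write `φ(-q) = ∑_{i ∈ ℤ} (-1) ^ i q ^ (i ^ 2) = 1 + 2 θ(q)`. The generating function of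
overpartitions with parts in `S` is `∏_{k ∈ S} (1 + X ^ k) / (1 - X ^ k)`, so inclusion-exclusion
over the multiples of `a` and `b` and Gauss's identity `φ(-q) = ∏ (1 - q ^ k) / (1 + q ^ k)` give
`F = φ(-X ^ a) φ(-X ^ b) / (φ(-X) φ(-X ^ l))` with `l = lcm(a, b)`. Modulo `8` one has `φ ^ 4 = 1`,
and the quotient becomes `F = A * B + 4 θ(X) ^ 2`, where for `a ≡ 3` and `b ≡ 0` modulo `4` the
exponents of `A` are `0`, `1` or `3` modulo `4` and those of `B` are multiples of `4`. Hence an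
exponent `m ≡ 2` modulo `4` can only come from `4 θ(X) ^ 2 ≡ 4 ∑ X ^ (2 i ^ 2)`, and the
coefficient there vanishes unless `m / 2` is a square. -/

open Filter Finset PowerSeries
open scoped Pointwise PowerSeries.WithPiTopology Topology

section Shanks

variable {A : Type*} [CommRing A]

/-- The `r`-th summand `(-1) ^ r q ^ (r (n + 1)) (-1; q)_r (q; q)_n / (q; q)_r` in Shanks's finite
form of Gauss's identity, written without division. -/
def shanksTerm (q : A) (n r : ℕ) : A :=
  (-1) ^ r * q ^ (r * (n + 1)) * (∏ k ∈ range r, (1 + q ^ k)) * ∏ k ∈ Ico r n, (1 - q ^ (k + 1))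

lemma sum_shanksTerm_succ_sub (q : A) {m n : ℕ} (hmn : m ≤ n) :
    ∑ r ∈ range (m + 1), (shanksTerm q (n + 1) r - (1 + q ^ (n + 1)) * shanksTerm q n r) =
      (-1) ^ (m + 1) * q ^ ((m + 1) * (n + 1)) * (∏ k ∈ range (m + 1), (1 + q ^ k)) *
        ∏ k ∈ Ico m n, (1 - q ^ (k + 1)) := by
  induction m with
  | zero =>
    rw [zero_add, sum_range_one, prod_range_one, shanksTerm, shanksTerm, prod_range_zero,
      prod_Ico_succ_top n.zero_le]
    ring
  | succ m ih =>
    rw [sum_range_succ, ih (by lia), shanksTerm, shanksTerm, prod_Ico_succ_top hmn,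
      prod_eq_prod_Ico_succ_bot (show m < n from hmn), prod_range_succ _ (m + 1)]
    ring

theorem prod_one_add_pow_mul_partial_theta_eq_sum_shanksTerm (q : A) (n : ℕ) :
    (∏ k ∈ range n, (1 + q ^ (k + 1))) *
        (1 + 2 * ∑ i ∈ range n, (-1) ^ (i + 1) * q ^ ((i + 1) ^ 2)) =
      ∑ r ∈ range (n + 1), shanksTerm q n r := by
  induction n with
  | zero => simp [shanksTerm]
  | succ n ih =>
    have step := sum_shanksTerm_succ_sub q le_rfl (n := n)
    have top : shanksTerm q (n + 1) (n + 1) = (-1) ^ (n + 1) * q ^ ((n + 1) * (n + 2)) *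
        ((∏ k ∈ range n, (1 + q ^ (k + 1))) * 2) := by
      rw [shanksTerm, prod_range_succ', Ico_self, prod_empty, pow_zero, one_add_one_eq_two, mul_one]
    rw [sum_sub_distrib, ← mul_sum, ← ih, Ico_self, prod_empty, prod_range_succ', pow_zero] at step
    rw [sum_range_succ _ (n + 1), top, prod_range_succ, sum_range_succ]
    linear_combination -step

theorem pow_succ_dvd_prod_mul_partial_theta_sub_prod (q : A) (n : ℕ) :
    q ^ (n + 1) ∣ (∏ k ∈ range n, (1 + q ^ (k + 1))) *
        (1 + 2 * ∑ i ∈ range n, (-1) ^ (i + 1) * q ^ ((i + 1) ^ 2)) -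
      ∏ k ∈ range n, (1 - q ^ (k + 1)) := by
  have bottom : shanksTerm q n 0 = ∏ k ∈ range n, (1 - q ^ (k + 1)) := by simp [shanksTerm]
  rw [prod_one_add_pow_mul_partial_theta_eq_sum_shanksTerm, sum_range_succ', bottom,
    add_sub_cancel_right]
  refine dvd_sum fun r _ ↦ ?_
  have hpow : q ^ (n + 1) ∣ q ^ ((r + 1) * (n + 1)) :=
    pow_dvd_pow q (Nat.le_mul_of_pos_left _ r.succ_pos)
  exact ((hpow.mul_left _).mul_right _).mul_right _

end Shanks

section Order

variable {R : Type*} [CommSemiring R]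

lemma tendsto_order_nhds_top {f : ℕ → R⟦X⟧} (h : ∀ k : ℕ, (k : ℕ∞) ≤ (f k).order) :
    Tendsto (fun k ↦ (f k).order) atTop (𝓝 ⊤) :=
  ENat.tendsto_nhds_top_iff_natCast_lt.mpr fun n ↦ (eventually_gt_atTop n).mono fun k hk ↦
    (Nat.cast_lt.mpr hk).trans_le (h k)

lemma le_order_pow_of_le {q : R⟦X⟧} (hq : q.constantCoeff = 0) {k n : ℕ} (hkn : k ≤ n) :
    (k : ℕ∞) ≤ (q ^ n).order :=
  (Nat.cast_le.mpr hkn).trans (le_order_pow_of_constantCoeff_eq_zero n hq)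

lemma tendsto_nhds_zero_of_X_pow_dvd [TopologicalSpace R] {f : ℕ → R⟦X⟧}
    (h : ∀ n, X ^ (n + 1) ∣ f n) : Tendsto f atTop (𝓝 0) := by
  rw [WithPiTopology.tendsto_iff_coeff_tendsto]
  refine fun d ↦ tendsto_atTop_of_eventually_const (i₀ := d) fun n hn ↦ ?_
  rw [X_pow_dvd_iff.mp (h n) d (Nat.lt_succ_of_le hn), map_zero]

lemma multipliable_one_add_smul_pow [TopologicalSpace R] {q : R⟦X⟧} (hq : q.constantCoeff = 0)
    (ε : R) : Multipliable fun k : ℕ ↦ 1 + ε • q ^ (k + 1) :=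
  WithPiTopology.multipliable_one_add_of_tendsto_order_atTop_nhds_top R <|
    tendsto_order_nhds_top fun k ↦ (le_order_pow_of_le hq k.le_succ).trans le_order_smul

end Order

section Theta

variable {R : Type*} [CommRing R] [TopologicalSpace R]

/-- The half `θ(q) = ∑_{i ≥ 1} (-1) ^ i q ^ (i ^ 2)` of Gauss's theta series, so that
`1 + 2 * thetaTail q` is Ramanujan's `φ(-q)`. -/
noncomputable def thetaTail (q : R⟦X⟧) : R⟦X⟧ :=
  ∑' i : ℕ, (-1) ^ (i + 1) * q ^ ((i + 1) ^ 2)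

lemma summable_thetaTail {q : R⟦X⟧} (hq : q.constantCoeff = 0) :
    Summable fun i : ℕ ↦ (-1) ^ (i + 1) * q ^ ((i + 1) ^ 2) := by
  refine WithPiTopology.summable_of_tendsto_order_atTop_nhds_top R (tendsto_order_nhds_top ?_)
  intro k
  have hle : k ≤ (k + 1) ^ 2 := by nlinarith
  exact ((le_order_pow_of_le hq hle).trans le_add_self).trans (le_order_mul _ _)

variable [T2Space R]

lemma coeff_thetaTail_X_pow_eq_zero {j m : ℕ} (hj : 0 < j) (h : ∀ i, j * i ^ 2 ≠ m) :
    (thetaTail (X ^ j : R⟦X⟧)).coeff m = 0 := by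
  rw [thetaTail, (summable_thetaTail (by simp [hj.ne'])).map_tsum _
    (WithPiTopology.continuous_coeff R m)]
  refine (tsum_congr fun i ↦ ?_).trans tsum_zero
  rw [← pow_mul, ← map_one C, ← map_neg, ← map_pow, coeff_C_mul, coeff_X_pow, if_neg (h _).symm,
    mul_zero]

variable [IsTopologicalRing R]

theorem tprod_one_add_pow_mul_theta {q : R⟦X⟧} (hq : q.constantCoeff = 0) :
    (∏' k : ℕ, (1 + q ^ (k + 1))) * (1 + 2 * thetaTail q) = ∏' k : ℕ, (1 - q ^ (k + 1)) := by
  have hadd : Multipliable fun k : ℕ ↦ 1 + q ^ (k + 1) := by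
    simpa using multipliable_one_add_smul_pow hq 1
  have hsub : Multipliable fun k : ℕ ↦ 1 - q ^ (k + 1) := by
    simpa [sub_eq_add_neg] using multipliable_one_add_smul_pow hq (-1)
  have hlim := (hadd.tendsto_prod_tprod_nat.mul
    (((summable_thetaTail hq).tendsto_sum_tsum_nat.const_mul 2).const_add 1)).sub
    hsub.tendsto_prod_tprod_nat
  have hzero := tendsto_nhds_zero_of_X_pow_dvd fun n ↦
    (pow_dvd_pow_of_dvd (X_dvd_iff.mpr hq) (n + 1)).trans
      (pow_succ_dvd_prod_mul_partial_theta_sub_prod q n)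
  exact sub_eq_zero.mp (tendsto_nhds_unique hlim hzero)

end Theta

section PartsProd

variable {R : Type*} [CommSemiring R] [TopologicalSpace R]

/-- The product `∏_{k ∈ S, k ≥ 1} (1 + ε X ^ k)`. The quotient of its values at `ε = 1` and
`ε = -1` is the generating function of overpartitions with parts in `S`. -/
noncomputable def partsProd (ε : R) (S : Set ℕ) : R⟦X⟧ :=
  ∏' k : ℕ, S.mulIndicator (fun i ↦ 1 + ε • X ^ i) (k + 1)

lemma multipliable_partsProd (ε : R) (S : Set ℕ) :
    Multipliable fun k : ℕ ↦ S.mulIndicator (fun i ↦ 1 + ε • (X : R⟦X⟧) ^ i) (k + 1) := by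
  have hterm (k : ℕ) : S.mulIndicator (fun i ↦ 1 + ε • (X : R⟦X⟧) ^ i) (k + 1) =
      1 + S.indicator (fun i ↦ ε • (X : R⟦X⟧) ^ i) (k + 1) := by
    by_cases hk : k + 1 ∈ S <;> simp [hk]
  simp only [hterm]
  refine WithPiTopology.multipliable_one_add_of_tendsto_order_atTop_nhds_top R
    (tendsto_order_nhds_top fun k ↦ ?_)
  by_cases hk : k + 1 ∈ S
  · rw [Set.indicator_of_mem hk]
    exact (le_order_pow_of_le constantCoeff_X k.le_succ).trans le_order_smul
  · simp [hk]

lemma partsProd_setOf_dvd (ε : R) {j : ℕ} (hj : 0 < j) :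
    partsProd ε {k | j ∣ k} = ∏' i : ℕ, (1 + ε • (X ^ j : R⟦X⟧) ^ (i + 1)) := by
  have hpos (i : ℕ) : j * (i + 1) - 1 + 1 = j * (i + 1) :=
    Nat.sub_add_cancel (Nat.mul_pos hj i.succ_pos)
  have hinj : Function.Injective fun i : ℕ ↦ j * (i + 1) - 1 := fun i i' h ↦ by
    have := congrArg (· + 1) h
    simpa [hpos, hj.ne'] using this
  rw [partsProd, ← hinj.tprod_eq]
  · refine tprod_congr fun i ↦ ?_
    have hmem : j * (i + 1) ∈ {k | j ∣ k} := dvd_mul_right j (i + 1)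
    rw [hpos, Set.mulIndicator_of_mem hmem, pow_mul]
  · intro k hk
    have hdvd : k + 1 ∈ {k | j ∣ k} := Set.mem_of_mulIndicator_ne_one hk
    obtain ⟨i, hi⟩ := hdvd
    obtain ⟨i, rfl⟩ := Nat.exists_eq_add_one_of_ne_zero (show i ≠ 0 by rintro rfl; simp at hi)
    exact ⟨i, by simp only [← hi, Nat.add_sub_cancel]⟩

variable [T2Space R] [IsTopologicalSemiring R]

lemma partsProd_union_mul_inter (ε : R) (S T : Set ℕ) :
    partsProd ε (S ∪ T) * partsProd ε (S ∩ T) = partsProd ε S * partsProd ε T := by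
  simp only [partsProd]
  rw [← (multipliable_partsProd ε _).tprod_mul (multipliable_partsProd ε _),
    ← (multipliable_partsProd ε _).tprod_mul (multipliable_partsProd ε _)]
  exact tprod_congr fun k ↦ Set.mulIndicator_union_mul_inter_apply _ _ _ _

lemma partsProd_compl_mul_self (ε : R) (S : Set ℕ) :
    partsProd ε Sᶜ * partsProd ε S = partsProd ε Set.univ := by
  simp only [partsProd]
  rw [← (multipliable_partsProd ε _).tprod_mul (multipliable_partsProd ε _)]
  exact tprod_congr fun k ↦ by
    rw [Set.mulIndicator_compl_mul_self_apply, Set.mulIndicator_univ]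

end PartsProd

section Gauss

variable {R : Type*} [CommRing R] [TopologicalSpace R] [T2Space R]

lemma isUnit_partsProd (ε : R) (S : Set ℕ) : IsUnit (partsProd ε S) := by
  rw [isUnit_iff_constantCoeff, partsProd, (multipliable_partsProd ε S).map_tprod _
    (WithPiTopology.continuous_constantCoeff R)]
  have hterm (k : ℕ) :
      (S.mulIndicator (fun i ↦ 1 + ε • (X : R⟦X⟧) ^ i) (k + 1)).constantCoeff = 1 := by
    by_cases hk : k + 1 ∈ S <;> simp [hk]
  simp [hterm]

theorem partsProd_one_setOf_dvd_mul_theta [IsTopologicalRing R] {j : ℕ} (hj : 0 < j) :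
    partsProd 1 {k | j ∣ k} * (1 + 2 * thetaTail (X ^ j : R⟦X⟧)) =
      partsProd (-1) {k | j ∣ k} := by
  rw [partsProd_setOf_dvd 1 hj, partsProd_setOf_dvd (-1) hj]
  simpa [sub_eq_add_neg] using tprod_one_add_pow_mul_theta (q := (X ^ j : R⟦X⟧)) (by simp [hj.ne'])

end Gauss

section Overpartitions

lemma coeff_genFun_indicator_two {R : Type*} [CommSemiring R] (a b n : ℕ) :
    (Nat.Partition.genFun fun i _ ↦ ({k | a ∣ k} ∪ {k | b ∣ k})ᶜ.indicator (2 : ℕ → R) i).coeff n =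
      biregOverpartitions a b n := by
  rw [Nat.Partition.coeff_genFun, biregOverpartitions, Nat.cast_sum]
  refine sum_congr rfl fun p _ ↦ ?_
  rw [Finsupp.prod, Multiset.toFinsupp_support]
  have hmem (x : ℕ) : x ∈ ({k | a ∣ k} ∪ {k | b ∣ k})ᶜ ↔ ¬ a ∣ x ∧ ¬ b ∣ x := not_or
  split_ifs with h
  · have hterm : ∀ x ∈ p.parts.toFinset,
        ({k | a ∣ k} ∪ {k | b ∣ k})ᶜ.indicator (2 : ℕ → R) x = 2 := fun x hx ↦
      Set.indicator_of_mem ((hmem x).mpr (h x (Multiset.mem_toFinset.mp hx))) _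
    rw [prod_congr rfl hterm, prod_const, Nat.cast_pow, Nat.cast_ofNat]
  · obtain ⟨x, hx, hx'⟩ := not_forall₂.mp h
    rw [prod_eq_zero (Multiset.mem_toFinset.mpr hx) (Set.indicator_of_notMem
      (mt (hmem x).mp hx') _), Nat.cast_zero]

variable {R : Type*} [CommRing R] [TopologicalSpace R] [IsTopologicalRing R] [T2Space R]

lemma one_add_tsum_two_smul_pow_mul_one_sub {q : R⟦X⟧} (hq : q.constantCoeff = 0) :
    (1 + ∑' j : ℕ, (2 : R) • q ^ (j + 1)) * (1 - q) = 1 + q := by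
  have hsum : ∑' j : ℕ, (2 : R) • q ^ (j + 1) = 2 * q * ∑' j : ℕ, q ^ j := by
    rw [← (WithPiTopology.summable_pow_of_constantCoeff_eq_zero hq).tsum_mul_left]
    refine tsum_congr fun j ↦ ?_
    rw [ofNat_smul_eq_nsmul, nsmul_eq_mul, pow_succ', mul_assoc, Nat.cast_ofNat]
  rw [hsum]
  linear_combination 2 * q * WithPiTopology.tsum_pow_mul_one_sub_of_constantCoeff_eq_zero hq

theorem genFun_indicator_two_mul_partsProd (S : Set ℕ) :
    Nat.Partition.genFun (fun i _ ↦ S.indicator (2 : ℕ → R) i) * partsProd (-1) S =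
      partsProd 1 S := by
  refine ((Nat.Partition.hasProd_genFun fun i _ ↦ S.indicator (2 : ℕ → R) i).mul
    (multipliable_partsProd (-1) S).hasProd).tprod_eq.symm.trans (tprod_congr fun k ↦ ?_)
  by_cases hk : k + 1 ∈ S
  · have hX : (X ^ (k + 1) : R⟦X⟧).constantCoeff = 0 := by simp
    simp only [Set.indicator_of_mem hk, Set.mulIndicator_of_mem hk, Pi.ofNat_apply, pow_mul,
      neg_one_smul, one_smul, ← sub_eq_add_neg]
    exact one_add_tsum_two_smul_pow_mul_one_sub hX
  · simp [hk]

theorem mk_biregOverpartitions_mul_theta_s19 {a b : ℕ} (ha : 0 < a) (hb : 0 < b) :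
    (mk fun n ↦ (biregOverpartitions a b n : R)) *
        ((1 + 2 * thetaTail X) * (1 + 2 * thetaTail (X ^ a.lcm b))) =
      (1 + 2 * thetaTail (X ^ a)) * (1 + 2 * thetaTail (X ^ b)) := by
  set A : Set ℕ := {k | a ∣ k}
  set B : Set ℕ := {k | b ∣ k}
  set F : R⟦X⟧ := mk fun n ↦ (biregOverpartitions a b n : R)
  have hF : F * partsProd (-1) (A ∪ B)ᶜ = partsProd 1 (A ∪ B)ᶜ := by
    rw [← genFun_indicator_two_mul_partsProd]
    congr 1
    ext n
    rw [coeff_mk, coeff_genFun_indicator_two]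
  have hA : partsProd 1 A * (1 + 2 * thetaTail (X ^ a : R⟦X⟧)) = partsProd (-1) A :=
    partsProd_one_setOf_dvd_mul_theta ha
  have hB : partsProd 1 B * (1 + 2 * thetaTail (X ^ b : R⟦X⟧)) = partsProd (-1) B :=
    partsProd_one_setOf_dvd_mul_theta hb
  have hAB : partsProd 1 (A ∩ B) * (1 + 2 * thetaTail (X ^ a.lcm b : R⟦X⟧)) =
      partsProd (-1) (A ∩ B) := by
    have hinter : A ∩ B = {k | a.lcm b ∣ k} := Set.ext fun k ↦ Nat.lcm_dvd_iff.symm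
    rw [hinter]
    exact partsProd_one_setOf_dvd_mul_theta (Nat.lcm_pos ha hb)
  have huniv : partsProd 1 Set.univ * (1 + 2 * thetaTail (X : R⟦X⟧)) =
      partsProd (-1) Set.univ := by
    simpa using partsProd_one_setOf_dvd_mul_theta (R := R) one_pos
  refine ((isUnit_partsProd (1 : R) Set.univ).mul (isUnit_partsProd 1 (A ∩ B))).mul_left_cancel ?_
  calc
    _ = F * (partsProd (-1) Set.univ * partsProd (-1) (A ∩ B)) := by
      rw [← huniv, ← hAB]; ring
    _ = F * partsProd (-1) (A ∪ B)ᶜ * (partsProd (-1) A * partsProd (-1) B) := by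
      rw [← partsProd_union_mul_inter _ A, ← partsProd_compl_mul_self _ (A ∪ B)]; ring
    _ = partsProd 1 (A ∪ B)ᶜ * (partsProd 1 A * partsProd 1 B) *
        ((1 + 2 * thetaTail (X ^ a)) * (1 + 2 * thetaTail (X ^ b))) := by
      rw [hF, ← hA, ← hB]; ring
    _ = _ := by
      rw [← partsProd_union_mul_inter, ← partsProd_compl_mul_self _ (A ∪ B)]; ring

end Overpartitions

section ModEight

variable {A : Type*} [CommRing A]

lemma one_add_two_mul_pow_four (h8 : (8 : A) = 0) (x : A) : (1 + 2 * x) ^ 4 = 1 := by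
  linear_combination (x + 3 * x ^ 2 + 4 * x ^ 3 + 2 * x ^ 4) * h8

lemma eq_of_mul_one_add_two_mul_eq (h8 : (8 : A) = 0) {F x y z w : A}
    (h : F * ((1 + 2 * x) * (1 + 2 * z)) = (1 + 2 * y) * (1 + 2 * w)) :
    F = ((1 + 2 * y) * (1 + 2 * x) + 4 * x) * ((1 + 2 * w) * (1 + 2 * z) ^ 3) + 4 * x ^ 2 := by
  have hF : F = (1 + 2 * y) * (1 + 2 * x) ^ 3 * ((1 + 2 * w) * (1 + 2 * z) ^ 3) := by
    linear_combination (1 + 2 * x) ^ 3 * (1 + 2 * z) ^ 3 * h -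
      F * (1 + 2 * z) ^ 4 * one_add_two_mul_pow_four h8 x - F * one_add_two_mul_pow_four h8 z
  have hyx : (1 + 2 * y) * (1 + 2 * x) ^ 3 =
      (1 + 2 * y) * (1 + 2 * x) + 4 * x + 4 * x ^ 2 := by
    linear_combination (x ^ 2 + x ^ 3 + y * (x + 3 * x ^ 2 + 2 * x ^ 3)) * h8
  have hwz : 4 * ((1 + 2 * w) * (1 + 2 * z) ^ 3) = 4 := by
    linear_combination ((1 + 2 * z) ^ 3 * w + 3 * z + 6 * z ^ 2 + 4 * z ^ 3) * h8
  linear_combination hF + (1 + 2 * w) * (1 + 2 * z) ^ 3 * hyx + x ^ 2 * hwz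

end ModEight

section SupportedMod

variable {R : Type*} [CommSemiring R] {N : ℕ}

/-- The exponents occurring in `f` lie in the set `S` of residue classes modulo `N`. -/
def SupportedMod (S : Finset (ZMod N)) (f : R⟦X⟧) : Prop :=
  ∀ n : ℕ, (n : ZMod N) ∉ S → f.coeff n = 0

namespace SupportedMod

variable {S T : Finset (ZMod N)} {f g : R⟦X⟧}

lemma mono (hf : SupportedMod S f) (hST : S ⊆ T) : SupportedMod T f :=
  fun n hn ↦ hf n fun h ↦ hn (hST h)

lemma add (hf : SupportedMod S f) (hg : SupportedMod S g) : SupportedMod S (f + g) :=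
  fun n hn ↦ by rw [map_add, hf n hn, hg n hn, add_zero]

lemma mul (hf : SupportedMod S f) (hg : SupportedMod T g) : SupportedMod (S + T) (f * g) := by
  intro n hn
  rw [coeff_mul]
  refine sum_eq_zero fun p hp ↦ ?_
  by_cases hS : (p.1 : ZMod N) ∈ S
  · have hT : (p.2 : ZMod N) ∉ T := fun hT ↦
      hn (mem_antidiagonal.mp hp ▸ Nat.cast_add (R := ZMod N) p.1 p.2 ▸ add_mem_add hS hT)
    rw [hg _ hT, mul_zero]
  · rw [hf _ hS, zero_mul]

lemma natCast_mul (hf : SupportedMod S f) (c : ℕ) : SupportedMod S ((c : R⟦X⟧) * f) :=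
  fun n hn ↦ by rw [← nsmul_eq_mul, map_nsmul, hf n hn, smul_zero]

lemma one_add_two_mul (hf : SupportedMod S f) (h0 : 0 ∈ S) : SupportedMod S (1 + 2 * f) := by
  refine SupportedMod.add (fun n hn ↦ ?_) (hf.natCast_mul 2)
  rw [coeff_one, if_neg (by rintro rfl; exact hn (by simpa using h0))]

end SupportedMod

end SupportedMod

section SquareCoeff

variable {R : Type*} [CommSemiring R]

lemma mul_coeff_sq_eq_zero {c : R} (hc : 2 * c = 0) {f : R⟦X⟧} {m : ℕ}
    (hf : ∀ i, 2 * i = m → f.coeff i = 0) : c * (f ^ 2).coeff m = 0 := by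
  rw [pow_two, coeff_mul, mul_sum]
  refine sum_involution (fun p _ ↦ p.swap) (fun p _ ↦ ?_) (fun p hp hne hswap ↦ hne ?_)
    (fun p hp ↦ by simpa [add_comm] using hp) fun p _ ↦ p.swap_swap
  · rw [Prod.fst_swap, Prod.snd_swap, mul_comm (f.coeff p.2), ← two_mul, ← mul_assoc, hc, zero_mul]
  · have hdiag : p.2 = p.1 := congrArg Prod.fst hswap
    have hm : 2 * p.1 = m := by rw [two_mul, ← mem_antidiagonal.mp hp, hdiag]
    rw [hf _ hm, zero_mul, mul_zero]

end SquareCoeff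

section ThetaCoeff

variable {R : Type*} [CommRing R] [TopologicalSpace R] [T2Space R]

lemma mul_coeff_thetaTail_X_sq_eq_zero {c : R} (hc : 2 * c = 0) {m : ℕ}
    (hm : ∀ i, 2 * i ^ 2 ≠ m) : c * (thetaTail (X : R⟦X⟧) ^ 2).coeff m = 0 := by
  refine mul_coeff_sq_eq_zero hc fun k hk ↦ ?_
  have hsq : ∀ i, 1 * i ^ 2 ≠ k := fun i hi ↦ hm i (by rw [← hk, ← hi, one_mul])
  simpa using coeff_thetaTail_X_pow_eq_zero (R := R) one_pos hsq

lemma supportedMod_thetaTail_X_pow {N : ℕ} {S : Finset (ZMod N)} {j : ℕ} (hj : 0 < j)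
    (hS : ∀ x : ZMod N, j * x ^ 2 ∈ S) : SupportedMod S (thetaTail (X ^ j : R⟦X⟧)) :=
  fun n hn ↦ coeff_thetaTail_X_pow_eq_zero hj fun i hi ↦ hn (by simpa [← hi] using hS i)

lemma supportedMod_zero_theta_X_pow {N j : ℕ} (hj : 0 < j) (hN : N ∣ j) :
    SupportedMod ({0} : Finset (ZMod N)) (1 + 2 * thetaTail (X ^ j : R⟦X⟧)) := by
  have hj0 : (j : ZMod N) = 0 := (ZMod.natCast_eq_zero_iff j N).mpr hN
  exact (supportedMod_thetaTail_X_pow hj (by simp [hj0])).one_add_two_mul (mem_singleton_self 0)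

lemma supportedMod_zero_theta_mul_theta_pow_three {N j l : ℕ} (hj : 0 < j) (hNj : N ∣ j)
    (hl : 0 < l) (hNl : N ∣ l) :
    SupportedMod ({0} : Finset (ZMod N))
      ((1 + 2 * thetaTail (X ^ j)) * (1 + 2 * thetaTail (X ^ l : R⟦X⟧)) ^ 3) := by
  have h := supportedMod_zero_theta_X_pow (R := R) hl hNl
  rw [pow_succ, pow_two]
  exact ((supportedMod_zero_theta_X_pow hj hNj).mul ((h.mul h).mul h)).mono (by simp)

lemma supportedMod_four_theta_mul_theta_add {a : ℕ} (ha : a % 4 = 3) :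
    SupportedMod ({0, 1, 3} : Finset (ZMod 4))
      ((1 + 2 * thetaTail (X ^ a)) * (1 + 2 * thetaTail X) + 4 * thetaTail (X : R⟦X⟧)) := by
  have ha4 : (a : ZMod 4) = 3 := by rw [← ZMod.natCast_mod, ha]; rfl
  have hX : SupportedMod ({0, 1} : Finset (ZMod 4)) (thetaTail (X : R⟦X⟧)) := by
    rw [← pow_one X]
    exact supportedMod_thetaTail_X_pow one_pos (by decide)
  have hXa : SupportedMod ({0, 3} : Finset (ZMod 4)) (thetaTail (X ^ a : R⟦X⟧)) :=
    supportedMod_thetaTail_X_pow (by lia) (by rw [ha4]; decide)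
  have hmul := (hXa.one_add_two_mul (by decide)).mul (hX.one_add_two_mul (by decide))
  exact (hmul.mono (by decide)).add ((hX.mono (by decide)).natCast_mul 4)

end ThetaCoeff

lemma two_mul_sq_mod_sixteen (i : ℕ) :
    2 * i ^ 2 % 16 = 0 ∨ 2 * i ^ 2 % 16 = 2 ∨ 2 * i ^ 2 % 16 = 8 := by
  have hsq : i ^ 2 % 8 = 0 ∨ i ^ 2 % 8 = 1 ∨ i ^ 2 % 8 = 4 := by
    have h : ∀ r < 8, r ^ 2 % 8 = 0 ∨ r ^ 2 % 8 = 1 ∨ r ^ 2 % 8 = 4 := by decide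
    rw [Nat.pow_mod]
    exact h _ (Nat.mod_lt i (by simp))
  lia

theorem B3pow2_congruences_general {a b m : ℕ} (ha : a % 4 = 3) (hb : 4 ∣ b) (hb0 : 0 < b)
    (hm : m % 4 = 2) (hsq : ∀ i, 2 * i ^ 2 ≠ m) : 8 ∣ biregOverpartitions a b m := by
  have h8 : (8 : (ZMod 8)⟦X⟧) = 0 := by
    rw [← map_ofNat C 8, show (8 : ZMod 8) = 0 from rfl, map_zero]
  have ha0 : 0 < a := by lia
  have hm4 : (m : ZMod 4) = 2 := by rw [← ZMod.natCast_mod, hm]; rfl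
  have hF := eq_of_mul_one_add_two_mul_eq h8 (mk_biregOverpartitions_mul_theta_s19 ha0 hb0)
  have hAB := ((supportedMod_four_theta_mul_theta_add (R := ZMod 8) ha).mul
    (supportedMod_zero_theta_mul_theta_pow_three hb0 hb (Nat.lcm_pos ha0 hb0)
      (hb.trans (Nat.dvd_lcm_right a b)))) m (by rw [hm4]; decide)
  have hsquare : 4 * (thetaTail (X : (ZMod 8)⟦X⟧) ^ 2).coeff m = 0 :=
    mul_coeff_thetaTail_X_sq_eq_zero rfl hsq
  rw [← ZMod.natCast_eq_zero_iff, ← coeff_mk m fun n ↦ (biregOverpartitions a b n : ZMod 8), hF,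
    map_add, hAB, zero_add, ← map_ofNat C 4, coeff_C_mul, hsquare]

theorem B3pow2_congruences (t : ℕ) (ht : 2 ≤ t) (n : ℕ) :
    8 ∣ biregOverpartitions 3 (2 ^ t) (16 * n + 6) ∧
    8 ∣ biregOverpartitions 3 (2 ^ t) (16 * n + 10) ∧
    8 ∣ biregOverpartitions 3 (2 ^ t) (16 * n + 14) := by
  refine ⟨?_, ?_, ?_⟩ <;>
    exact B3pow2_congruences_general rfl (pow_dvd_pow 2 ht) (by positivity) (by lia)
      fun i hi ↦ by have := two_mul_sq_mod_sixteen i; lia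
end
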